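/- arXiv:2401.14875 — 6 statements merged into one kernel-verified Lean document; each statement's English description precedes it below -/
import Mathlib

section
/- Let 0 → C →f E →g M → 0 be a non-abelian extension of λ-weighted Rota-Baxter Lie coalgebras with retraction t, and let (h, ρ, φ) be the induced non-abelian 2-cocycle. A pair (α, β) ∈ Aut(C)×Aut(M) is extensible with respect to this extension if and only if there exists a linear map s : M → C satisfying: hβ − (α⊗α)h = (s⊗α)ρ − τ(s⊗α)ρ − Δ_C s + (s⊗s)Δ_M; ρβ − (β⊗α)ρ = (β⊗s)Δ_M; and φβ − αφ = sR_M − R_C s. -/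
open TensorProduct LinearMap

section

variable {k : Type*} [Field k]
variable {C : Type*} [AddCommGroup C] [Module k C]
variable {M : Type*} [AddCommGroup M] [Module k M]
variable {E : Type*} [AddCommGroup E] [Module k E]

/-- Co-antisymmetry of a cobracket: `Δ = -τΔ`. -/
def CoAnti (Δ : C →ₗ[k] C ⊗[k] C) : Prop :=
  Δ = -((TensorProduct.comm k C C).toLinearMap ∘ₗ Δ)

/-- The co-Jacobi identity `(I⊗Δ)Δ - (Δ⊗I)Δ + (I⊗τ)(Δ⊗I)Δ = 0`. -/
def CoJacobi (Δ : C →ₗ[k] C ⊗[k] C) : Prop :=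
  lTensor C Δ ∘ₗ Δ
    - (TensorProduct.assoc k C C C).toLinearMap ∘ₗ rTensor C Δ ∘ₗ Δ
    + lTensor C (TensorProduct.comm k C C).toLinearMap ∘ₗ
        (TensorProduct.assoc k C C C).toLinearMap ∘ₗ rTensor C Δ ∘ₗ Δ = 0

/-- `(R⊗R)Δ = (I⊗R + R⊗I + λI) Δ R`. -/
def IsRBO (lam : k) (Δ : C →ₗ[k] C ⊗[k] C) (R : C →ₗ[k] C) : Prop :=
  TensorProduct.map R R ∘ₗ Δ
    = (lTensor C R + rTensor C R + lam • (LinearMap.id : C ⊗[k] C →ₗ[k] C ⊗[k] C)) ∘ₗ Δ ∘ₗ R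

/-- `λ`-weighted Rota-Baxter Lie coalgebra. -/
def IsRBLC (lam : k) (Δ : C →ₗ[k] C ⊗[k] C) (R : C →ₗ[k] C) : Prop :=
  CoAnti Δ ∧ CoJacobi Δ ∧ IsRBO lam Δ R

/-- Homomorphism of `λ`-weighted Rota-Baxter Lie coalgebras:
`(θ⊗θ)Δ_C = Δ_E θ` and `R_E θ = θ R_C`. -/
def IsHom (ΔC : C →ₗ[k] C ⊗[k] C) (RC : C →ₗ[k] C)
    (ΔE : E →ₗ[k] E ⊗[k] E) (RE : E →ₗ[k] E) (θ : C →ₗ[k] E) : Prop :=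
  TensorProduct.map θ θ ∘ₗ ΔC = ΔE ∘ₗ θ ∧ RE ∘ₗ θ = θ ∘ₗ RC

/-- Non-abelian 2-cocycle `(h, ρ, φ)` on `(C, Δ_C, R_C)` with values in `(M, Δ_M, R_M)`. -/
def NA2Cocycle (lam : k) (ΔC : C →ₗ[k] C ⊗[k] C) (RC : C →ₗ[k] C)
    (ΔM : M →ₗ[k] M ⊗[k] M) (RM : M →ₗ[k] M)
    (h : M →ₗ[k] C ⊗[k] C) (ρ : M →ₗ[k] M ⊗[k] C) (φ : M →ₗ[k] C) : Prop :=
  -- (1)  τh + h = 0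
  ((TensorProduct.comm k C C).toLinearMap ∘ₗ h + h = 0) ∧
  -- (2)  (I⊗Δ_C)h − (Δ_C⊗I)h + (I⊗τ)(Δ_C⊗I)h = (h⊗I)ρ + (I⊗h)τρ − (I⊗τ)(h⊗I)ρ
  (lTensor C ΔC ∘ₗ h
      - (TensorProduct.assoc k C C C).toLinearMap ∘ₗ rTensor C ΔC ∘ₗ h
      + lTensor C (TensorProduct.comm k C C).toLinearMap ∘ₗ
          (TensorProduct.assoc k C C C).toLinearMap ∘ₗ rTensor C ΔC ∘ₗ h
    = (TensorProduct.assoc k C C C).toLinearMap ∘ₗ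
        TensorProduct.map h (LinearMap.id : C →ₗ[k] C) ∘ₗ ρ
      + lTensor C h ∘ₗ (TensorProduct.comm k M C).toLinearMap ∘ₗ ρ
      - lTensor C (TensorProduct.comm k C C).toLinearMap ∘ₗ
          (TensorProduct.assoc k C C C).toLinearMap ∘ₗ
          TensorProduct.map h (LinearMap.id : C →ₗ[k] C) ∘ₗ ρ) ∧
  -- (3)  (I⊗Δ_C)ρ + (I⊗h)Δ_M = (ρ⊗I)ρ − (I⊗τ)(ρ⊗I)ρ
  (lTensor M ΔC ∘ₗ ρ + lTensor M h ∘ₗ ΔM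
    = (TensorProduct.assoc k M C C).toLinearMap ∘ₗ rTensor C ρ ∘ₗ ρ
      - lTensor M (TensorProduct.comm k C C).toLinearMap ∘ₗ
          (TensorProduct.assoc k M C C).toLinearMap ∘ₗ rTensor C ρ ∘ₗ ρ) ∧
  -- (4)  (Δ_M⊗I)ρ = (I⊗τ)(ρ⊗I)Δ_M + (I⊗ρ)Δ_M
  ((TensorProduct.assoc k M M C).toLinearMap ∘ₗ rTensor C ΔM ∘ₗ ρ
    = lTensor M (TensorProduct.comm k C M).toLinearMap ∘ₗ
        (TensorProduct.assoc k M C M).toLinearMap ∘ₗ rTensor M ρ ∘ₗ ΔM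
      + lTensor M ρ ∘ₗ ΔM) ∧
  -- (5)
  (TensorProduct.map φ RC ∘ₗ ρ
      - TensorProduct.map RC φ ∘ₗ (TensorProduct.comm k M C).toLinearMap ∘ₗ ρ
      - TensorProduct.map φ (LinearMap.id : C →ₗ[k] C) ∘ₗ ρ ∘ₗ RM
      + lTensor C φ ∘ₗ (TensorProduct.comm k M C).toLinearMap ∘ₗ ρ ∘ₗ RM
      + TensorProduct.map φ φ ∘ₗ ΔM
      - (lTensor C RC + rTensor C RC
          + lam • (LinearMap.id : C ⊗[k] C →ₗ[k] C ⊗[k] C)) ∘ₗ ΔC ∘ₗ φ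
    = (rTensor C RC + lTensor C RC
        + lam • (LinearMap.id : C ⊗[k] C →ₗ[k] C ⊗[k] C)) ∘ₗ h ∘ₗ RM
      - TensorProduct.map RC RC ∘ₗ h) ∧
  -- (6)  (R_M⊗φ)Δ_M + (R_M⊗R_C)ρ = (I⊗φ)Δ_M R_M + (I⊗R_C + R_M⊗I + λ)ρR_M
  (TensorProduct.map RM φ ∘ₗ ΔM + TensorProduct.map RM RC ∘ₗ ρ
    = lTensor M φ ∘ₗ ΔM ∘ₗ RM
      + (lTensor M RC + rTensor C RM
          + lam • (LinearMap.id : M ⊗[k] C →ₗ[k] M ⊗[k] C)) ∘ₗ ρ ∘ₗ RM)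

/-- The cobracket `Δ_{(h,ρ)}` on `C ⊕ M`. -/
noncomputable def prodCobra (ΔC : C →ₗ[k] C ⊗[k] C) (ΔM : M →ₗ[k] M ⊗[k] M)
    (h : M →ₗ[k] C ⊗[k] C) (ρ : M →ₗ[k] M ⊗[k] C) :
    (C × M) →ₗ[k] (C × M) ⊗[k] (C × M) :=
  TensorProduct.map (LinearMap.inl k C M) (LinearMap.inl k C M) ∘ₗ
      (ΔC ∘ₗ LinearMap.fst k C M + h ∘ₗ LinearMap.snd k C M)
    + TensorProduct.map (LinearMap.inr k C M) (LinearMap.inr k C M) ∘ₗ ΔM ∘ₗ LinearMap.snd k C M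
    + TensorProduct.map (LinearMap.inr k C M) (LinearMap.inl k C M) ∘ₗ ρ ∘ₗ LinearMap.snd k C M
    - TensorProduct.map (LinearMap.inl k C M) (LinearMap.inr k C M) ∘ₗ
        (TensorProduct.comm k M C).toLinearMap ∘ₗ ρ ∘ₗ LinearMap.snd k C M

/-- The operator `R_φ` on `C ⊕ M`. -/
def prodRB (RC : C →ₗ[k] C) (RM : M →ₗ[k] M) (φ : M →ₗ[k] C) :
    (C × M) →ₗ[k] (C × M) :=
  LinearMap.inl k C M ∘ₗ (RC ∘ₗ LinearMap.fst k C M + φ ∘ₗ LinearMap.snd k C M)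
    + LinearMap.inr k C M ∘ₗ RM ∘ₗ LinearMap.snd k C M

/-- `(α,β)` is extensible with respect to the non-abelian extension
`0 → C →f E →g M → 0`. -/
def Extensible (ΔE : E →ₗ[k] E ⊗[k] E) (RE : E →ₗ[k] E)
    (f : C →ₗ[k] E) (g : E →ₗ[k] M) (α : C →ₗ[k] C) (β : M →ₗ[k] M) : Prop :=
  ∃ γ : E →ₗ[k] E, IsHom ΔE RE ΔE RE γ ∧ Function.Bijective γ ∧
    Submodule.map γ (LinearMap.range f) = LinearMap.range f ∧
    γ ∘ₗ f = f ∘ₗ α ∧ g ∘ₗ γ = β ∘ₗ g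

/-- `(h', ρ', φ')` differs from `(h, ρ, φ)` by the equivalence move associated to
the linear map `s : M → C`. -/
def EquivVia (ΔC : C →ₗ[k] C ⊗[k] C) (RC : C →ₗ[k] C)
    (ΔM : M →ₗ[k] M ⊗[k] M) (RM : M →ₗ[k] M) (s : M →ₗ[k] C)
    (h : M →ₗ[k] C ⊗[k] C) (ρ : M →ₗ[k] M ⊗[k] C) (φ : M →ₗ[k] C)
    (h' : M →ₗ[k] C ⊗[k] C) (ρ' : M →ₗ[k] M ⊗[k] C) (φ' : M →ₗ[k] C) : Prop :=
  h' - h = TensorProduct.map s (LinearMap.id : C →ₗ[k] C) ∘ₗ ρ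
      - (TensorProduct.comm k C C).toLinearMap ∘ₗ
          TensorProduct.map s (LinearMap.id : C →ₗ[k] C) ∘ₗ ρ
      + TensorProduct.map s s ∘ₗ ΔM - ΔC ∘ₗ s ∧
  ρ' - ρ = lTensor M s ∘ₗ ΔM ∧
  φ' - φ = s ∘ₗ RM - RC ∘ₗ s

/-- Two non-abelian 2-cocycles are equivalent. -/
def CocEquiv (ΔC : C →ₗ[k] C ⊗[k] C) (RC : C →ₗ[k] C)
    (ΔM : M →ₗ[k] M ⊗[k] M) (RM : M →ₗ[k] M)
    (h : M →ₗ[k] C ⊗[k] C) (ρ : M →ₗ[k] M ⊗[k] C) (φ : M →ₗ[k] C)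
    (h' : M →ₗ[k] C ⊗[k] C) (ρ' : M →ₗ[k] M ⊗[k] C) (φ' : M →ₗ[k] C) : Prop :=
  ∃ s : M →ₗ[k] C, EquivVia ΔC RC ΔM RM s h ρ φ h' ρ' φ'


theorem aux_map_map {A B A' B' A'' B'' : Type*} [AddCommGroup A] [Module k A]
    [AddCommGroup B] [Module k B] [AddCommGroup A'] [Module k A'] [AddCommGroup B'] [Module k B']
    [AddCommGroup A''] [Module k A''] [AddCommGroup B''] [Module k B'']
    (p : A' →ₗ[k] A'') (q : B' →ₗ[k] B'') (p' : A →ₗ[k] A') (q' : B →ₗ[k] B') (x : A ⊗[k] B) :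
    TensorProduct.map p q (TensorProduct.map p' q' x)
      = TensorProduct.map (p ∘ₗ p') (q ∘ₗ q') x := by
  rw [TensorProduct.map_comp]; rfl

theorem aux_comm_map {A B A' B' : Type*} [AddCommGroup A] [Module k A]
    [AddCommGroup B] [Module k B] [AddCommGroup A'] [Module k A'] [AddCommGroup B'] [Module k B']
    (p : A →ₗ[k] A') (q : B →ₗ[k] B') (x : A ⊗[k] B) :
    TensorProduct.comm k A' B' (TensorProduct.map p q x)
      = TensorProduct.map q p (TensorProduct.comm k A B x) := by
  induction x using TensorProduct.induction_on with
  | zero => simp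
  | tmul a b => simp
  | add a b ha hb => simp only [map_add, ha, hb]

theorem aux_joint {f : C →ₗ[k] E} {g : E →ₗ[k] M} {t : E →ₗ[k] C} {σ : M →ₗ[k] E}
    (hid : f ∘ₗ t + σ ∘ₗ g = LinearMap.id) {x y : E ⊗[k] E}
    (h1 : TensorProduct.map t t x = TensorProduct.map t t y)
    (h2 : TensorProduct.map g t x = TensorProduct.map g t y)
    (h3 : TensorProduct.map t g x = TensorProduct.map t g y)
    (h4 : TensorProduct.map g g x = TensorProduct.map g g y) : x = y := by
  have key : ∀ z : E ⊗[k] E, z = TensorProduct.map f f (TensorProduct.map t t z)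
      + TensorProduct.map f σ (TensorProduct.map t g z)
      + (TensorProduct.map σ f (TensorProduct.map g t z)
      + TensorProduct.map σ σ (TensorProduct.map g g z)) := by
    intro z
    simp only [aux_map_map]
    have : z = TensorProduct.map (f ∘ₗ t + σ ∘ₗ g) (f ∘ₗ t + σ ∘ₗ g) z := by
      rw [hid]; simp
    conv_lhs => rw [this]
    simp only [TensorProduct.map_add_left, TensorProduct.map_add_right, LinearMap.add_apply]
    abel
  rw [key x, key y, h1, h2, h3, h4]

/-- The value of the four components of `(γ⊗γ)Δ_E`. -/
theorem aux_comp {ΔC : C →ₗ[k] C ⊗[k] C} {ΔM : M →ₗ[k] M ⊗[k] M} {ΔE : E →ₗ[k] E ⊗[k] E}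
    (anti : CoAnti ΔE) {g : E →ₗ[k] M} {t : E →ₗ[k] C}
    (hg : TensorProduct.map g g ∘ₗ ΔE = ΔM ∘ₗ g)
    {h : M →ₗ[k] C ⊗[k] C} {ρ : M →ₗ[k] M ⊗[k] C}
    (hh : h ∘ₗ g = TensorProduct.map t t ∘ₗ ΔE - ΔC ∘ₗ t)
    (hρ : ρ ∘ₗ g = TensorProduct.map g t ∘ₗ ΔE)
    {α : C →ₗ[k] C} {β : M →ₗ[k] M}
    (hα : TensorProduct.map α α ∘ₗ ΔC = ΔC ∘ₗ α)
    {γ : E →ₗ[k] E} {s : M →ₗ[k] C}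
    (tγ : t ∘ₗ γ = α ∘ₗ t + s ∘ₗ g) (gγ : g ∘ₗ γ = β ∘ₗ g) (x : E) :
    TensorProduct.map t t (TensorProduct.map γ γ (ΔE x)) =
      TensorProduct.map α α (h (g x)) + ΔC (α (t x))
        + TensorProduct.map s α (ρ (g x))
        - TensorProduct.comm k C C (TensorProduct.map s α (ρ (g x)))
        + TensorProduct.map s s (ΔM (g x)) ∧
    TensorProduct.map g t (TensorProduct.map γ γ (ΔE x)) =
      TensorProduct.map β α (ρ (g x)) + TensorProduct.map β s (ΔM (g x)) ∧
    TensorProduct.map t t (ΔE (γ x)) = h (β (g x)) + ΔC (α (t x)) + ΔC (s (g x)) ∧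
    TensorProduct.map g t (ΔE (γ x)) = ρ (β (g x)) := by
  have hh' : ∀ y, TensorProduct.map t t (ΔE y) = h (g y) + ΔC (t y) := by
    intro y
    have := LinearMap.congr_fun hh y
    simp only [LinearMap.comp_apply, LinearMap.sub_apply] at this
    rw [this]; abel
  have hρ' : ∀ y, TensorProduct.map g t (ΔE y) = ρ (g y) := fun y =>
    (LinearMap.congr_fun hρ y).symm
  have hg' : ∀ y, TensorProduct.map g g (ΔE y) = ΔM (g y) := fun y => LinearMap.congr_fun hg y
  have hα' : ∀ y, TensorProduct.map α α (ΔC y) = ΔC (α y) := fun y => LinearMap.congr_fun hα y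
  have tγ' : ∀ y, t (γ y) = α (t y) + s (g y) := fun y => LinearMap.congr_fun tγ y
  have gγ' : ∀ y, g (γ y) = β (g y) := fun y => LinearMap.congr_fun gγ y
  have anti' : ∀ y, ΔE y = - TensorProduct.comm k E E (ΔE y) := fun y =>
    LinearMap.congr_fun anti y
  have htg : ∀ y, TensorProduct.map t g (ΔE y) = - TensorProduct.comm k M C (ρ (g y)) := by
    intro y
    rw [anti' y, map_neg, ← aux_comm_map, hρ']
  refine ⟨?_, ?_, ?_, ?_⟩
  · rw [aux_map_map, tγ]
    simp only [TensorProduct.map_add_left, TensorProduct.map_add_right, LinearMap.add_apply,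
      ← aux_map_map, hh', hρ', hg', htg, map_add, map_neg, hα', aux_comm_map]
    abel
  · rw [aux_map_map, tγ, gγ]
    simp only [TensorProduct.map_add_right, LinearMap.add_apply, ← aux_map_map, hρ', hg']
  · rw [hh', gγ', tγ', map_add]; abel
  · rw [hρ', gγ']

theorem stmt12 (lam : k) (ΔC : C →ₗ[k] C ⊗[k] C) (RC : C →ₗ[k] C)
    (ΔM : M →ₗ[k] M ⊗[k] M) (RM : M →ₗ[k] M)
    (ΔE : E →ₗ[k] E ⊗[k] E) (RE : E →ₗ[k] E)
    (hC : IsRBLC lam ΔC RC) (hM : IsRBLC lam ΔM RM) (hE : IsRBLC lam ΔE RE)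
    (f : C →ₗ[k] E) (g : E →ₗ[k] M)
    (homf : IsHom ΔC RC ΔE RE f) (homg : IsHom ΔE RE ΔM RM g)
    (injf : Function.Injective f) (surjg : Function.Surjective g)
    (hexact : LinearMap.range f = LinearMap.ker g)
    (t : E →ₗ[k] C) (ht : t ∘ₗ f = LinearMap.id)
    (h : M →ₗ[k] C ⊗[k] C) (ρ : M →ₗ[k] M ⊗[k] C) (φ : M →ₗ[k] C)
    (hh : h ∘ₗ g = TensorProduct.map t t ∘ₗ ΔE - ΔC ∘ₗ t)
    (hρ : ρ ∘ₗ g = TensorProduct.map g t ∘ₗ ΔE)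
    (hφ : φ ∘ₗ g = t ∘ₗ RE - RC ∘ₗ t)
    (α : C →ₗ[k] C) (β : M →ₗ[k] M)
    (homα : IsHom ΔC RC ΔC RC α) (bijα : Function.Bijective α)
    (homβ : IsHom ΔM RM ΔM RM β) (bijβ : Function.Bijective β) :
    Extensible ΔE RE f g α β ↔
      ∃ s : M →ₗ[k] C,
        -- hβ − (α⊗α)h = (s⊗α)ρ − τ(s⊗α)ρ − Δ_C s + (s⊗s)Δ_M
        h ∘ₗ β - TensorProduct.map α α ∘ₗ h
          = TensorProduct.map s α ∘ₗ ρ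
            - (TensorProduct.comm k C C).toLinearMap ∘ₗ TensorProduct.map s α ∘ₗ ρ
            - ΔC ∘ₗ s + TensorProduct.map s s ∘ₗ ΔM ∧
        -- ρβ − (β⊗α)ρ = (β⊗s)Δ_M
        ρ ∘ₗ β - TensorProduct.map β α ∘ₗ ρ = TensorProduct.map β s ∘ₗ ΔM ∧
        -- φβ − αφ = sR_M − R_C s
        φ ∘ₗ β - α ∘ₗ φ = s ∘ₗ RM - RC ∘ₗ s := by
  have homg1 := homg.1
  have homg2 : ∀ x, RM (g x) = g (RE x) := fun x => LinearMap.congr_fun homg.2 x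
  have hα2 : ∀ x, RC (α x) = α (RC x) := fun x => LinearMap.congr_fun homα.2 x
  have hβ2 : ∀ x, RM (β x) = β (RM x) := fun x => LinearMap.congr_fun homβ.2 x
  have hβ1 : ∀ x, TensorProduct.map β β (ΔM x) = ΔM (β x) := fun x =>
    LinearMap.congr_fun homβ.1 x
  have hg1 : ∀ x, TensorProduct.map g g (ΔE x) = ΔM (g x) := fun x =>
    LinearMap.congr_fun homg.1 x
  have tf : ∀ x, t (f x) = x := fun x => LinearMap.congr_fun ht x
  have gf : ∀ x, g (f x) = 0 := fun x => by
    have : f x ∈ LinearMap.ker g := hexact ▸ LinearMap.mem_range_self f x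
    simpa using this
  have hφ' : ∀ y, t (RE y) = φ (g y) + RC (t y) := by
    intro y
    have := LinearMap.congr_fun hφ y
    simp only [LinearMap.comp_apply, LinearMap.sub_apply] at this
    rw [this]; abel
  obtain ⟨σ₀, hσ₀⟩ := LinearMap.exists_rightInverse_of_surjective g (LinearMap.range_eq_top.2 surjg)
  have hσ₀' : ∀ m, g (σ₀ m) = m := fun m => LinearMap.congr_fun hσ₀ m
  obtain ⟨σ, gσ, tσ⟩ : ∃ σ : M →ₗ[k] E, (∀ m, g (σ m) = m) ∧ ∀ m, t (σ m) = 0 :=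
    ⟨σ₀ - f ∘ₗ t ∘ₗ σ₀, fun m => by simp [gf, hσ₀'], fun m => by simp [tf]⟩
  have hext : ∀ x y : E, t x = t y → g x = g y → x = y := by
    intro x y h1 h2
    have : x - y ∈ LinearMap.range f := by rw [hexact]; simp [h2]
    obtain ⟨c, hc⟩ := this
    have hc0 : c = 0 := by rw [← tf c, hc, map_sub, h1, sub_self]
    rw [hc0, map_zero] at hc
    exact (sub_eq_zero.1 hc.symm)
  have hid : f ∘ₗ t + σ ∘ₗ g = LinearMap.id := by
    ext x
    apply hext <;> simp [tf, gf, gσ, tσ]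
  constructor
  · rintro ⟨γ, ⟨homγ1, homγ2⟩, -, -, γf, gγ⟩
    have γf' : ∀ x, γ (f x) = f (α x) := fun x => LinearMap.congr_fun γf x
    have tγ : t ∘ₗ γ = α ∘ₗ t + (t ∘ₗ γ ∘ₗ σ) ∘ₗ g := by
      ext x
      have hx : f (t x) + σ (g x) = x := LinearMap.congr_fun hid x
      have : t (γ (f (t x) + σ (g x))) = α (t x) + t (γ (σ (g x))) := by
        rw [map_add, map_add, γf', tf]
      rw [hx] at this
      exact this
    generalize t ∘ₗ γ ∘ₗ σ = s at tγ
    have tγ' : ∀ y, t (γ y) = α (t y) + s (g y) := fun y => LinearMap.congr_fun tγ y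
    have gγ' : ∀ y, g (γ y) = β (g y) := fun y => LinearMap.congr_fun gγ y
    refine ⟨s, ?_, ?_, ?_⟩
    · ext m
      obtain ⟨x, rfl⟩ := surjg m
      obtain ⟨h1, h2, h3, h4⟩ := aux_comp hE.1 homg1 hh hρ homα.1 tγ gγ x
      have e := LinearMap.congr_fun homγ1 x
      simp only [LinearMap.comp_apply] at e
      rw [e, h3] at h1
      simp only [LinearMap.comp_apply, LinearMap.sub_apply, LinearMap.add_apply,
        LinearEquiv.coe_coe]
      rw [sub_eq_iff_eq_add]
      have h1' := eq_sub_of_add_eq (eq_sub_of_add_eq h1)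
      rw [h1']; abel
    · ext m
      obtain ⟨x, rfl⟩ := surjg m
      obtain ⟨h1, h2, h3, h4⟩ := aux_comp hE.1 homg1 hh hρ homα.1 tγ gγ x
      have e := LinearMap.congr_fun homγ1 x
      simp only [LinearMap.comp_apply] at e
      rw [e, h4] at h2
      simp only [LinearMap.comp_apply, LinearMap.sub_apply]
      rw [h2]; abel
    · ext m
      obtain ⟨x, rfl⟩ := surjg m
      have e : RE (γ x) = γ (RE x) := LinearMap.congr_fun homγ2 x
      have e1 := hφ' (γ x)
      rw [e, tγ', gγ', tγ', hφ', map_add, map_add, hα2, ← homg2] at e1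
      simp only [LinearMap.comp_apply, LinearMap.sub_apply]
      rw [eq_sub_of_add_eq e1.symm]; abel
  · rintro ⟨s, e1, e2, e3⟩
    obtain ⟨γ, tγ, gγ⟩ : ∃ γ : E →ₗ[k] E, t ∘ₗ γ = α ∘ₗ t + s ∘ₗ g ∧ g ∘ₗ γ = β ∘ₗ g :=
      ⟨f ∘ₗ (α ∘ₗ t + s ∘ₗ g) + σ ∘ₗ β ∘ₗ g, by ext x; simp [tf, tσ], by ext x; simp [gf, gσ]⟩
    have tγ' : ∀ y, t (γ y) = α (t y) + s (g y) := fun y => LinearMap.congr_fun tγ y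
    have gγ' : ∀ y, g (γ y) = β (g y) := fun y => LinearMap.congr_fun gγ y
    have γf : ∀ c, γ (f c) = f (α c) := by
      intro c
      apply hext <;> simp [tγ', gγ', tf, gf]
    refine ⟨γ, ⟨?_, ?_⟩, ⟨?_, ?_⟩, ?_, LinearMap.ext γf, gγ⟩
    · ext x
      obtain ⟨h1, h2, h3, h4⟩ := aux_comp hE.1 homg1 hh hρ homα.1 tγ gγ x
      have e1x := LinearMap.congr_fun e1 (g x)
      have e2x := LinearMap.congr_fun e2 (g x)
      simp only [LinearMap.comp_apply, LinearMap.sub_apply, LinearMap.add_apply,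
        LinearEquiv.coe_coe] at e1x e2x
      have anti' : ∀ y, ΔE y = - TensorProduct.comm k E E (ΔE y) := fun y =>
        LinearMap.congr_fun hE.1 y
      have hgt : TensorProduct.map g t (TensorProduct.map γ γ (ΔE x))
          = TensorProduct.map g t (ΔE (γ x)) := by
        rw [h2, h4, ← e2x]; abel
      simp only [LinearMap.comp_apply]
      refine aux_joint hid ?_ hgt ?_ ?_
      · rw [h1, h3, sub_eq_iff_eq_add.1 e1x]; abel
      · rw [anti' x, anti' (γ x)]
        simp only [map_neg, ← aux_comm_map]
        rw [hgt]
      · rw [hg1, aux_map_map, gγ, ← aux_map_map, hg1, hβ1, gγ']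
    · ext x
      have e3x := LinearMap.congr_fun e3 (g x)
      simp only [LinearMap.comp_apply, LinearMap.sub_apply] at e3x
      simp only [LinearMap.comp_apply]
      apply hext
      · rw [hφ', tγ', gγ', tγ', hφ', map_add, map_add, hα2, ← homg2, sub_eq_iff_eq_add.1 e3x]
        abel
      · rw [← homg2, gγ', gγ', ← homg2, hβ2]
    · intro x y hxy
      have hgxy : g x = g y := bijβ.1 (by rw [← gγ', ← gγ', hxy])
      refine hext x y (bijα.1 ?_) hgxy
      have : t (γ x) = t (γ y) := by rw [hxy]
      rw [tγ', tγ', hgxy] at this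
      exact add_right_cancel this
    · intro e
      obtain ⟨m, hm⟩ := bijβ.2 (g e)
      obtain ⟨c, hc⟩ := bijα.2 (t e - s m)
      refine ⟨f c + σ m, ?_⟩
      apply hext
      · rw [tγ']; simp [tf, gf, tσ, gσ, hc]
      · rw [gγ']; simp [gf, gσ, hm]
    · apply le_antisymm
      · rintro _ ⟨_, ⟨c, rfl⟩, rfl⟩
        exact ⟨α c, (γf c).symm⟩
      · rintro _ ⟨c, rfl⟩
        obtain ⟨d, rfl⟩ := bijα.2 c
        exact ⟨f d, ⟨d, rfl⟩, γf d⟩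

end
end

section
/- Let (h, ρ, φ) be a non-abelian 2-cocycle on the λ-weighted Rota-Baxter Lie coalgebra (C, Δ_C, R_C) with values in (M, Δ_M, R_M), and let (α, β) ∈ Aut(C)×Aut(M) be a pair of λ-weighted Rota-Baxter Lie coalgebra automorphisms. Then the triple h_{(α,β)} = (α⊗α)hβ^{−1}, ρ_{(α,β)} = (β⊗α)ρβ^{−1}, φ_{(α,β)} = αφβ^{−1} is again a non-abelian 2-cocycle on (C, Δ_C, R_C) with values in (M, Δ_M, R_M). -/
open TensorProduct LinearMap

section

variable {k : Type*} [Field k]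
variable {C : Type*} [AddCommGroup C] [Module k C]
variable {M : Type*} [AddCommGroup M] [Module k M]
variable {E : Type*} [AddCommGroup E] [Module k E]

theorem aux_mm {A B A' B' A'' B'' : Type*} [AddCommGroup A] [Module k A] [AddCommGroup B] [Module k B]
    [AddCommGroup A'] [Module k A'] [AddCommGroup B'] [Module k B']
    [AddCommGroup A''] [Module k A''] [AddCommGroup B''] [Module k B'']
    (f : A →ₗ[k] A') (g : B →ₗ[k] B') (f' : A' →ₗ[k] A'') (g' : B' →ₗ[k] B'') (x : A ⊗[k] B) :
    TensorProduct.map f' g' (TensorProduct.map f g x)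
      = TensorProduct.map (f' ∘ₗ f) (g' ∘ₗ g) x := by
  rw [TensorProduct.map_comp]; rfl

theorem aux_comm {A B A' B' : Type*} [AddCommGroup A] [Module k A] [AddCommGroup B] [Module k B]
    [AddCommGroup A'] [Module k A'] [AddCommGroup B'] [Module k B']
    (f : A →ₗ[k] A') (g : B →ₗ[k] B') (x : A ⊗[k] B) :
    TensorProduct.comm k A' B' (TensorProduct.map f g x)
      = TensorProduct.map g f (TensorProduct.comm k A B x) := by
  induction x with
  | zero => simp
  | tmul a b => simp
  | add a b ha hb => simp only [map_add, ha, hb]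

theorem aux_comm' {A B A' B' : Type*} [AddCommGroup A] [Module k A] [AddCommGroup B] [Module k B]
    [AddCommGroup A'] [Module k A'] [AddCommGroup B'] [Module k B']
    (f : A →ₗ[k] A') (g : B →ₗ[k] B') :
    (TensorProduct.comm k A' B').toLinearMap ∘ₗ TensorProduct.map f g
      = TensorProduct.map g f ∘ₗ (TensorProduct.comm k A B).toLinearMap :=
  LinearMap.ext fun x => aux_comm f g x

theorem aux_assoc {A B D A' B' D' X : Type*} [AddCommGroup A] [Module k A]
    [AddCommGroup B] [Module k B] [AddCommGroup D] [Module k D]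
    [AddCommGroup A'] [Module k A'] [AddCommGroup B'] [Module k B']
    [AddCommGroup D'] [Module k D'] [AddCommGroup X] [Module k X]
    (f : A →ₗ[k] A') (g : B →ₗ[k] B') (d : D →ₗ[k] D') (u : X →ₗ[k] A ⊗[k] B) (x : X ⊗[k] D) :
    TensorProduct.assoc k A' B' D' (TensorProduct.map (TensorProduct.map f g ∘ₗ u) d x)
      = TensorProduct.map f (TensorProduct.map g d)
          (TensorProduct.assoc k A B D (TensorProduct.map u LinearMap.id x)) := by
  have : TensorProduct.map (TensorProduct.map f g ∘ₗ u) d x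
      = TensorProduct.map (TensorProduct.map f g) d (TensorProduct.map u LinearMap.id x) := by
    rw [aux_mm]; rfl
  rw [this]
  exact (LinearMap.congr_fun (TensorProduct.map_map_comp_assoc_eq f g d) _).symm

theorem aux_main (lam : k) (ΔC : C →ₗ[k] C ⊗[k] C) (RC : C →ₗ[k] C)
    (ΔM : M →ₗ[k] M ⊗[k] M) (RM : M →ₗ[k] M)
    (h : M →ₗ[k] C ⊗[k] C) (ρ : M →ₗ[k] M ⊗[k] C) (φ : M →ₗ[k] C)
    (hcoc : NA2Cocycle lam ΔC RC ΔM RM h ρ φ)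
    (α : C →ₗ[k] C) (β : M →ₗ[k] M)
    (homα : IsHom ΔC RC ΔC RC α)
    (homβ : IsHom ΔM RM ΔM RM β) (bijβ : Function.Surjective β)
    (h' : M →ₗ[k] C ⊗[k] C) (ρ' : M →ₗ[k] M ⊗[k] C) (φ' : M →ₗ[k] C)
    (eh : h' ∘ₗ β = TensorProduct.map α α ∘ₗ h)
    (er : ρ' ∘ₗ β = TensorProduct.map β α ∘ₗ ρ)
    (ep : φ' ∘ₗ β = α ∘ₗ φ) :
    NA2Cocycle lam ΔC RC ΔM RM h' ρ' φ' := by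
  obtain ⟨h1, h2, h3, h4, h5, h6⟩ := hcoc
  obtain ⟨a1, a2⟩ := homα
  obtain ⟨b1, b2⟩ := homβ
  have eh' := fun m => LinearMap.congr_fun eh m
  have er' := fun m => LinearMap.congr_fun er m
  have ep' := fun m => LinearMap.congr_fun ep m
  have a1' := fun m => (LinearMap.congr_fun a1 m).symm
  have a2' := fun m => LinearMap.congr_fun a2 m
  have b1' := fun m => (LinearMap.congr_fun b1 m).symm
  have b2' := fun m => LinearMap.congr_fun b2 m
  replace a1 := a1.symm
  replace b1 := b1.symm
  simp only [LinearMap.comp_apply] at eh' er' ep' a1' a2' b1' b2'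
  refine ⟨?_, ?_, ?_, ?_, ?_, ?_⟩ <;> refine LinearMap.ext fun m => ?_ <;>
    obtain ⟨m, rfl⟩ := bijβ m
  · have := congrArg (TensorProduct.map α α) (LinearMap.congr_fun h1 m)
    simp only [LinearMap.comp_apply, LinearMap.add_apply, LinearMap.sub_apply, map_add, map_sub,
      LinearMap.zero_apply, map_zero, LinearMap.smul_apply, map_smul, LinearMap.id_apply,
      LinearEquiv.coe_coe, LinearMap.lTensor, LinearMap.rTensor, eh', er', ep', a1', a2', b1', b2',
      aux_mm, aux_comm, aux_comm', aux_assoc, LinearMap.id_comp, LinearMap.comp_id,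
      eh, er, ep, a1, a2, b1, b2] at this ⊢
    exact this
  · have := congrArg (TensorProduct.map α (TensorProduct.map α α)) (LinearMap.congr_fun h2 m)
    simp only [LinearMap.comp_apply, LinearMap.add_apply, LinearMap.sub_apply, map_add, map_sub,
      LinearMap.zero_apply, map_zero, LinearMap.smul_apply, map_smul, LinearMap.id_apply,
      LinearEquiv.coe_coe, LinearMap.lTensor, LinearMap.rTensor, eh', er', ep', a1', a2', b1', b2',
      aux_mm, aux_comm, aux_comm', aux_assoc, LinearMap.id_comp, LinearMap.comp_id,
      eh, er, ep, a1, a2, b1, b2] at this ⊢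
    exact this
  · have := congrArg (TensorProduct.map β (TensorProduct.map α α)) (LinearMap.congr_fun h3 m)
    simp only [LinearMap.comp_apply, LinearMap.add_apply, LinearMap.sub_apply, map_add, map_sub,
      LinearMap.zero_apply, map_zero, LinearMap.smul_apply, map_smul, LinearMap.id_apply,
      LinearEquiv.coe_coe, LinearMap.lTensor, LinearMap.rTensor, eh', er', ep', a1', a2', b1', b2',
      aux_mm, aux_comm, aux_comm', aux_assoc, LinearMap.id_comp, LinearMap.comp_id,
      eh, er, ep, a1, a2, b1, b2] at this ⊢
    exact this
  · have := congrArg (TensorProduct.map β (TensorProduct.map β α)) (LinearMap.congr_fun h4 m)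
    simp only [LinearMap.comp_apply, LinearMap.add_apply, LinearMap.sub_apply, map_add, map_sub,
      LinearMap.zero_apply, map_zero, LinearMap.smul_apply, map_smul, LinearMap.id_apply,
      LinearEquiv.coe_coe, LinearMap.lTensor, LinearMap.rTensor, eh', er', ep', a1', a2', b1', b2',
      aux_mm, aux_comm, aux_comm', aux_assoc, LinearMap.id_comp, LinearMap.comp_id,
      eh, er, ep, a1, a2, b1, b2] at this ⊢
    exact this
  · have := congrArg (TensorProduct.map α α) (LinearMap.congr_fun h5 m)
    simp only [LinearMap.comp_apply, LinearMap.add_apply, LinearMap.sub_apply, map_add, map_sub,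
      LinearMap.zero_apply, map_zero, LinearMap.smul_apply, map_smul, LinearMap.id_apply,
      LinearEquiv.coe_coe, LinearMap.lTensor, LinearMap.rTensor, eh', er', ep', a1', a2', b1', b2',
      aux_mm, aux_comm, aux_comm', aux_assoc, LinearMap.id_comp, LinearMap.comp_id,
      eh, er, ep, a1, a2, b1, b2] at this ⊢
    exact this
  · have := congrArg (TensorProduct.map β α) (LinearMap.congr_fun h6 m)
    simp only [LinearMap.comp_apply, LinearMap.add_apply, LinearMap.sub_apply, map_add, map_sub,
      LinearMap.zero_apply, map_zero, LinearMap.smul_apply, map_smul, LinearMap.id_apply,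
      LinearEquiv.coe_coe, LinearMap.lTensor, LinearMap.rTensor, eh', er', ep', a1', a2', b1', b2',
      aux_mm, aux_comm, aux_comm', aux_assoc, LinearMap.id_comp, LinearMap.comp_id,
      eh, er, ep, a1, a2, b1, b2] at this ⊢
    exact this

theorem stmt13 (lam : k) (ΔC : C →ₗ[k] C ⊗[k] C) (RC : C →ₗ[k] C)
    (ΔM : M →ₗ[k] M ⊗[k] M) (RM : M →ₗ[k] M)
    (hC : IsRBLC lam ΔC RC) (hM : IsRBLC lam ΔM RM)
    (h : M →ₗ[k] C ⊗[k] C) (ρ : M →ₗ[k] M ⊗[k] C) (φ : M →ₗ[k] C)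
    (hcoc : NA2Cocycle lam ΔC RC ΔM RM h ρ φ)
    (α : C →ₗ[k] C) (β : M →ₗ[k] M)
    (homα : IsHom ΔC RC ΔC RC α) (bijα : Function.Bijective α)
    (homβ : IsHom ΔM RM ΔM RM β) (bijβ : Function.Bijective β)
    -- `β'` is the inverse of `β`:
    (β' : M →ₗ[k] M) (hβ'₁ : β ∘ₗ β' = LinearMap.id) (hβ'₂ : β' ∘ₗ β = LinearMap.id) :
    NA2Cocycle lam ΔC RC ΔM RM
      (TensorProduct.map α α ∘ₗ h ∘ₗ β')
      (TensorProduct.map β α ∘ₗ ρ ∘ₗ β')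
      (α ∘ₗ φ ∘ₗ β') := by
  have e : ∀ m, β' (β m) = m := fun m => LinearMap.congr_fun hβ'₂ m
  refine aux_main lam ΔC RC ΔM RM h ρ φ hcoc α β homα homβ bijβ.2 _ _ _ ?_ ?_ ?_ <;>
    refine LinearMap.ext fun m => ?_ <;> simp only [LinearMap.comp_apply, e]

end
end

section
/- Let 0 → C →f E →g M → 0 be a non-abelian extension of λ-weighted Rota-Baxter Lie coalgebras with retraction t, and let (h, ρ, φ) be the induced non-abelian 2-cocycle. A pair (α, β) ∈ Aut(C)×Aut(M) is extensible with respect to this extension if and only if the non-abelian 2-cocycles (h_{(α,β)}, ρ_{(α,β)}, φ_{(α,β)}) and (h, ρ, φ) are equivalent, where h_{(α,β)} = (α⊗α)hβ^{−1}, ρ_{(α,β)} = (β⊗α)ρβ^{−1}, φ_{(α,β)} = αφβ^{−1}. -/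
open TensorProduct LinearMap

section

variable {k : Type*} [Field k]
variable {C : Type*} [AddCommGroup C] [Module k C]
variable {M : Type*} [AddCommGroup M] [Module k M]
variable {E : Type*} [AddCommGroup E] [Module k E]

theorem stmt14_key (ΔC : C →ₗ[k] C ⊗[k] C) (RC : C →ₗ[k] C)
    (ΔM : M →ₗ[k] M ⊗[k] M) (RM : M →ₗ[k] M)
    (ΔE : E →ₗ[k] E ⊗[k] E) (RE : E →ₗ[k] E)
    (hE : CoAnti ΔE)
    (f : C →ₗ[k] E) (g : E →ₗ[k] M)
    (homg : IsHom ΔE RE ΔM RM g)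
    (surjg : Function.Surjective g)
    (t : E →ₗ[k] C)
    (σ : M →ₗ[k] E) (hσ : f ∘ₗ t + σ ∘ₗ g = LinearMap.id)
    (h : M →ₗ[k] C ⊗[k] C) (ρ : M →ₗ[k] M ⊗[k] C) (φ : M →ₗ[k] C)
    (hh : h ∘ₗ g = TensorProduct.map t t ∘ₗ ΔE - ΔC ∘ₗ t)
    (hρ : ρ ∘ₗ g = TensorProduct.map g t ∘ₗ ΔE)
    (hφ : φ ∘ₗ g = t ∘ₗ RE - RC ∘ₗ t)
    (α : C →ₗ[k] C) (β : M →ₗ[k] M)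
    (homα : IsHom ΔC RC ΔC RC α)
    (homβ : IsHom ΔM RM ΔM RM β) (bijβ : Function.Bijective β)
    (β' : M →ₗ[k] M) (hβ'₂ : β' ∘ₗ β = LinearMap.id)
    (s : M →ₗ[k] C) (γ : E →ₗ[k] E)
    (htγ : t ∘ₗ γ = α ∘ₗ t + s ∘ₗ β ∘ₗ g) (hgγ : g ∘ₗ γ = β ∘ₗ g) :
    IsHom ΔE RE ΔE RE γ ↔
      EquivVia ΔC RC ΔM RM s
        (TensorProduct.map α α ∘ₗ h ∘ₗ β')
        (TensorProduct.map β α ∘ₗ ρ ∘ₗ β')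
        (α ∘ₗ φ ∘ₗ β')
        h ρ φ := by
  have anti : ∀ e, TensorProduct.comm k E E (ΔE e) = - ΔE e := by
    intro e
    have := congrArg (fun F => F e) hE
    simp only [LinearMap.neg_apply, LinearMap.comp_apply, LinearEquiv.coe_coe] at this
    rw [eq_comm, neg_eq_iff_eq_neg]; exact this
  have b' : ∀ m, β' (β m) = m := fun m => LinearMap.congr_fun hβ'₂ m
  have eh : ∀ e, TensorProduct.map t t (ΔE e) = h (g e) + ΔC (t e) := by
    intro e
    have := LinearMap.congr_fun hh e
    simp only [LinearMap.sub_apply, LinearMap.comp_apply] at this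
    rw [this]; abel
  have eρ : ∀ e, TensorProduct.map g t (ΔE e) = ρ (g e) :=
    fun e => (LinearMap.congr_fun hρ e).symm
  have eφ : ∀ e, t (RE e) = φ (g e) + RC (t e) := by
    intro e
    have := LinearMap.congr_fun hφ e
    simp only [LinearMap.sub_apply, LinearMap.comp_apply] at this
    rw [this]; abel
  have eg : ∀ e, TensorProduct.map g g (ΔE e) = ΔM (g e) :=
    fun e => LinearMap.congr_fun homg.1 e
  have egR : ∀ e, g (RE e) = RM (g e) := fun e => (LinearMap.congr_fun homg.2 e).symm
  have eα : ∀ e, TensorProduct.map α α (ΔC e) = ΔC (α e) :=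
    fun e => LinearMap.congr_fun homα.1 e
  have eαR : ∀ e, α (RC e) = RC (α e) := fun e => (LinearMap.congr_fun homα.2 e).symm
  have eβ : ∀ e, TensorProduct.map β β (ΔM e) = ΔM (β e) :=
    fun e => LinearMap.congr_fun homβ.1 e
  have eβR : ∀ e, β (RM e) = RM (β e) := fun e => (LinearMap.congr_fun homβ.2 e).symm
  have etγ : ∀ e, t (γ e) = α (t e) + s (β (g e)) := fun e => LinearMap.congr_fun htγ e
  have egγ : ∀ e, g (γ e) = β (g e) := fun e => LinearMap.congr_fun hgγ e
  -- the map on tensors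
  have mtt : ∀ y, TensorProduct.map t t (TensorProduct.map γ γ y) =
      TensorProduct.map α α (TensorProduct.map t t y)
      + TensorProduct.map s LinearMap.id (TensorProduct.map β α (TensorProduct.map g t y))
      + TensorProduct.comm k C C (TensorProduct.map s LinearMap.id
          (TensorProduct.map β α (TensorProduct.map g t (TensorProduct.comm k E E y))))
      + TensorProduct.map s s (TensorProduct.map β β (TensorProduct.map g g y)) := by
    intro y
    induction y with
    | zero => simp
    | tmul a b =>
      simp only [TensorProduct.map_tmul, TensorProduct.comm_tmul, etγ, LinearMap.id_apply,
        TensorProduct.add_tmul, TensorProduct.tmul_add]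
      abel
    | add a b ha hb => simp only [map_add, ha, hb]; abel
  have mgt : ∀ y, TensorProduct.map g t (TensorProduct.map γ γ y) =
      TensorProduct.map β α (TensorProduct.map g t y)
      + lTensor M s (TensorProduct.map β β (TensorProduct.map g g y)) := by
    intro y
    induction y with
    | zero => simp
    | tmul a b =>
      simp only [TensorProduct.map_tmul, etγ, egγ, LinearMap.lTensor_tmul, TensorProduct.tmul_add]
    | add a b ha hb => simp only [map_add, ha, hb]; abel
  have mgg : ∀ y, TensorProduct.map g g (TensorProduct.map γ γ y) =
      TensorProduct.map β β (TensorProduct.map g g y) := by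
    intro y
    induction y with
    | zero => simp
    | tmul a b => simp only [TensorProduct.map_tmul, egγ]
    | add a b ha hb => simp only [map_add, ha, hb]
  have mtg : ∀ y, TensorProduct.map t g y =
      TensorProduct.comm k M C (TensorProduct.map g t (TensorProduct.comm k E E y)) := by
    intro y
    induction y with
    | zero => simp
    | tmul a b => simp
    | add a b ha hb => simp only [map_add, ha, hb]
  have mcγ : ∀ y, TensorProduct.comm k E E (TensorProduct.map γ γ y) =
      TensorProduct.map γ γ (TensorProduct.comm k E E y) := by
    intro y
    induction y with
    | zero => simp
    | tmul a b => simp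
    | add a b ha hb => simp only [map_add, ha, hb]
  have eσ : ∀ e, f (t e) + σ (g e) = e := fun e => LinearMap.congr_fun hσ e
  have dec : ∀ y, y = TensorProduct.map f f (TensorProduct.map t t y)
      + TensorProduct.map f σ (TensorProduct.map t g y)
      + TensorProduct.map σ f (TensorProduct.map g t y)
      + TensorProduct.map σ σ (TensorProduct.map g g y) := by
    intro y
    induction y with
    | zero => simp
    | tmul a b =>
      simp only [TensorProduct.map_tmul]
      conv_lhs => rw [← eσ a, ← eσ b]
      simp only [TensorProduct.add_tmul, TensorProduct.tmul_add]
      abel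
    | add a b ha hb =>
      conv_lhs => rw [ha, hb]
      simp only [map_add]; abel
  have surj : ∀ m, ∃ e, β (g e) = m := by
    intro m
    obtain ⟨n, rfl⟩ := bijβ.2 m
    obtain ⟨e, rfl⟩ := surjg n
    exact ⟨e, rfl⟩
  constructor
  · rintro ⟨h1, h2⟩
    have h1 : ∀ e, TensorProduct.map γ γ (ΔE e) = ΔE (γ e) := fun e => LinearMap.congr_fun h1 e
    have h2 : ∀ e, RE (γ e) = γ (RE e) := fun e => LinearMap.congr_fun h2 e
    refine ⟨LinearMap.ext fun m => ?_, LinearMap.ext fun m => ?_, LinearMap.ext fun m => ?_⟩ <;>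
      obtain ⟨e, rfl⟩ := surj m
    · have := mtt (ΔE e)
      rw [h1] at this
      simp only [eh, egγ, etγ, anti, eρ, eg, eβ, map_neg, map_add, eα] at this
      simp only [LinearMap.sub_apply, LinearMap.add_apply, LinearMap.comp_apply,
        LinearEquiv.coe_coe, b']
      rw [← sub_eq_zero] at this ⊢
      rw [← this]; abel
    · have := mgt (ΔE e)
      rw [h1] at this
      simp only [egγ, eρ, eg, eβ] at this
      simp only [LinearMap.sub_apply, LinearMap.comp_apply, b']
      rw [this]; abel
    · have := eφ (γ e)
      rw [h2] at this
      simp only [egγ, etγ, eφ, egR, eβR, map_add, eαR] at this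
      simp only [LinearMap.sub_apply, LinearMap.comp_apply, b']
      rw [← sub_eq_zero] at this ⊢
      rw [← neg_eq_zero, ← this]; abel
  · rintro ⟨h1, h2, h3⟩
    have tt : ∀ e, TensorProduct.map t t (TensorProduct.map γ γ (ΔE e)) =
        TensorProduct.map t t (ΔE (γ e)) := by
      intro e
      have := LinearMap.congr_fun h1 (β (g e))
      simp only [LinearMap.sub_apply, LinearMap.add_apply, LinearMap.comp_apply,
        LinearEquiv.coe_coe, b'] at this
      rw [mtt]
      simp only [eh, egγ, etγ, anti, eρ, eg, eβ, map_neg, map_add, eα]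
      rw [← sub_eq_zero] at this ⊢
      rw [← neg_eq_zero, ← this]; abel
    have gt : ∀ e, TensorProduct.map g t (TensorProduct.map γ γ (ΔE e)) =
        TensorProduct.map g t (ΔE (γ e)) := by
      intro e
      have := LinearMap.congr_fun h2 (β (g e))
      simp only [LinearMap.sub_apply, LinearMap.comp_apply, b'] at this
      rw [mgt]
      simp only [egγ, eρ, eg, eβ]
      rw [← this]; abel
    refine ⟨LinearMap.ext fun e => ?_, LinearMap.ext fun e => ?_⟩
    · simp only [LinearMap.comp_apply]
      rw [dec (TensorProduct.map γ γ (ΔE e)), dec (ΔE (γ e)), mtg, mtg, mcγ, anti, anti]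
      simp only [map_neg, tt, gt, mgg, eg, eβ, egγ]
    · simp only [LinearMap.comp_apply]
      rw [← eσ (RE (γ e)), ← eσ (γ (RE e))]
      have := LinearMap.congr_fun h3 (β (g e))
      simp only [LinearMap.sub_apply, LinearMap.comp_apply, b'] at this
      have ht' : t (RE (γ e)) = t (γ (RE e)) := by
        simp only [egγ, etγ, eφ, egR, eβR, map_add, eαR]
        rw [← sub_eq_zero] at this ⊢
        rw [← this]; abel
      rw [ht']
      simp only [egγ, egR, eβR]

theorem stmt14 (lam : k) (ΔC : C →ₗ[k] C ⊗[k] C) (RC : C →ₗ[k] C)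
    (ΔM : M →ₗ[k] M ⊗[k] M) (RM : M →ₗ[k] M)
    (ΔE : E →ₗ[k] E ⊗[k] E) (RE : E →ₗ[k] E)
    (hC : IsRBLC lam ΔC RC) (hM : IsRBLC lam ΔM RM) (hE : IsRBLC lam ΔE RE)
    (f : C →ₗ[k] E) (g : E →ₗ[k] M)
    (homf : IsHom ΔC RC ΔE RE f) (homg : IsHom ΔE RE ΔM RM g)
    (injf : Function.Injective f) (surjg : Function.Surjective g)
    (hexact : LinearMap.range f = LinearMap.ker g)
    (t : E →ₗ[k] C) (ht : t ∘ₗ f = LinearMap.id)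
    (h : M →ₗ[k] C ⊗[k] C) (ρ : M →ₗ[k] M ⊗[k] C) (φ : M →ₗ[k] C)
    (hh : h ∘ₗ g = TensorProduct.map t t ∘ₗ ΔE - ΔC ∘ₗ t)
    (hρ : ρ ∘ₗ g = TensorProduct.map g t ∘ₗ ΔE)
    (hφ : φ ∘ₗ g = t ∘ₗ RE - RC ∘ₗ t)
    (α : C →ₗ[k] C) (β : M →ₗ[k] M)
    (homα : IsHom ΔC RC ΔC RC α) (bijα : Function.Bijective α)
    (homβ : IsHom ΔM RM ΔM RM β) (bijβ : Function.Bijective β)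
    (β' : M →ₗ[k] M) (hβ'₁ : β ∘ₗ β' = LinearMap.id) (hβ'₂ : β' ∘ₗ β = LinearMap.id) :
    Extensible ΔE RE f g α β ↔
      CocEquiv ΔC RC ΔM RM
        (TensorProduct.map α α ∘ₗ h ∘ₗ β')
        (TensorProduct.map β α ∘ₗ ρ ∘ₗ β')
        (α ∘ₗ φ ∘ₗ β')
        h ρ φ := by
  obtain ⟨σ₀, hσ₀⟩ := g.exists_rightInverse_of_surjective (LinearMap.range_eq_top.2 surjg)
  have hgf : ∀ c, g (f c) = 0 := fun c => by
    have : f c ∈ LinearMap.ker g := hexact ▸ LinearMap.mem_range_self f c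
    exact this
  have htf : ∀ c, t (f c) = c := fun c => LinearMap.congr_fun ht c
  have hgσ₀ : ∀ m, g (σ₀ m) = m := fun m => LinearMap.congr_fun hσ₀ m
  have hker : ∀ e, g e = 0 → e = f (t e) := by
    intro e he
    have : e ∈ LinearMap.range f := hexact ▸ he
    obtain ⟨c, rfl⟩ := this
    rw [htf]
  set σ : M →ₗ[k] E := σ₀ - f ∘ₗ t ∘ₗ σ₀ with hσdef
  have hgσ : ∀ m, g (σ m) = m := by intro m; simp [hσdef, hgσ₀, hgf]
  have htσ : ∀ m, t (σ m) = 0 := by intro m; simp [hσdef, htf]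
  have hσ : f ∘ₗ t + σ ∘ₗ g = LinearMap.id := by
    ext e
    have := hker (e - σ (g e)) (by simp [hgσ])
    rw [map_sub, htσ, sub_zero] at this
    simp only [LinearMap.add_apply, LinearMap.comp_apply, LinearMap.id_apply]
    rw [← this]; abel
  have eσ : ∀ e, f (t e) + σ (g e) = e := fun e => LinearMap.congr_fun hσ e
  have key := stmt14_key ΔC RC ΔM RM ΔE RE hE.1 f g homg surjg t σ hσ h ρ φ hh hρ hφ α β
    homα homβ bijβ β' hβ'₂
  have b' : ∀ m, β' (β m) = m := fun m => LinearMap.congr_fun hβ'₂ m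
  constructor
  · rintro ⟨γ, hγ, -, -, hγf, hgγ⟩
    have eγf : ∀ c, γ (f c) = f (α c) := fun c => LinearMap.congr_fun hγf c
    refine ⟨t ∘ₗ γ ∘ₗ σ ∘ₗ β', (key _ γ ?_ hgγ).1 hγ⟩
    ext e
    simp only [LinearMap.add_apply, LinearMap.comp_apply, b']
    conv_lhs => rw [← eσ e]
    rw [map_add, map_add, eγf, htf]
  · rintro ⟨s, hs⟩
    set γ : E →ₗ[k] E := f ∘ₗ (α ∘ₗ t + s ∘ₗ β ∘ₗ g) + σ ∘ₗ β ∘ₗ g with hγdef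
    have htγ : t ∘ₗ γ = α ∘ₗ t + s ∘ₗ β ∘ₗ g := by
      ext e; simp [hγdef, htf, htσ]
    have hgγ : g ∘ₗ γ = β ∘ₗ g := by
      ext e; simp [hγdef, hgf, hgσ]
    have hγf : γ ∘ₗ f = f ∘ₗ α := by
      ext c; simp [hγdef, hgf, htf]
    have etγ : ∀ e, t (γ e) = α (t e) + s (β (g e)) := fun e => LinearMap.congr_fun htγ e
    have egγ : ∀ e, g (γ e) = β (g e) := fun e => LinearMap.congr_fun hgγ e
    refine ⟨γ, (key s γ htγ hgγ).2 hs, ⟨?_, ?_⟩, ?_, hγf, hgγ⟩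
    · rw [injective_iff_map_eq_zero]
      intro e he
      have h1 := egγ e
      have h2 := etγ e
      rw [he, map_zero] at h1 h2
      have h3 : g e = 0 := bijβ.1 (by rw [← h1, map_zero])
      rw [h3, map_zero, map_zero, add_zero] at h2
      have h4 : t e = 0 := bijα.1 (by rw [← h2, map_zero])
      rw [← eσ e, h3, h4]; simp
    · intro e
      obtain ⟨m, hm⟩ := bijβ.2 (g e)
      obtain ⟨c, hc⟩ := bijα.2 (t e - s (g e))
      refine ⟨f c + σ m, ?_⟩
      rw [← eσ (γ _), etγ, egγ]
      simp only [map_add, hgf, hgσ, htf, htσ, zero_add, add_zero, hm, hc]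
      rw [← map_add, sub_add_cancel, eσ]
    · rw [← LinearMap.range_comp, hγf, LinearMap.range_comp, LinearMap.range_eq_top.2 bijα.2,
        Submodule.map_top]

end
end

section
/- Let 0 → C →f E →g M → 0 be a non-abelian extension of λ-weighted Rota-Baxter Lie coalgebras, let t and t′ be two retractions with induced non-abelian 2-cocycles (h, ρ, φ) and (h′, ρ′, φ′), and let (α, β) ∈ Aut(C)×Aut(M). Then the linear map s : M → C given by s(g(e)) = t′(e) − t(e) is well defined and the twisted cocycles (h′_{(α,β)}, ρ′_{(α,β)}, φ′_{(α,β)}) and (h_{(α,β)}, ρ_{(α,β)}, φ_{(α,β)}) are equivalent via the linear map αsβ^{−1}; consequently the Wells map W(α,β) = [(h_{(α,β)}, ρ_{(α,β)}, φ_{(α,β)}) − (h, ρ, φ)] does not depend on the choice of retraction. -/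
open TensorProduct LinearMap

section

variable {k : Type*} [Field k]
variable {C : Type*} [AddCommGroup C] [Module k C]
variable {M : Type*} [AddCommGroup M] [Module k M]
variable {E : Type*} [AddCommGroup E] [Module k E]

/-- A pair of triples of structure maps, thought of as a formal difference of
non-abelian 2-cocycles. -/
def PairRel (ΔC : C →ₗ[k] C ⊗[k] C) (RC : C →ₗ[k] C)
    (ΔM : M →ₗ[k] M ⊗[k] M) (RM : M →ₗ[k] M)
    (p q : ((M →ₗ[k] C ⊗[k] C) × (M →ₗ[k] M ⊗[k] C) × (M →ₗ[k] C)) ×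
      ((M →ₗ[k] C ⊗[k] C) × (M →ₗ[k] M ⊗[k] C) × (M →ₗ[k] C))) : Prop :=
  CocEquiv ΔC RC ΔM RM p.1.1 p.1.2.1 p.1.2.2 q.1.1 q.1.2.1 q.1.2.2 ∧
  CocEquiv ΔC RC ΔM RM p.2.1 p.2.2.1 p.2.2.2 q.2.1 q.2.2.1 q.2.2.2

/-- The cocycles induced by two retractions are equivalent. -/
theorem aux_equiv (ΔC : C →ₗ[k] C ⊗[k] C) (RC : C →ₗ[k] C)
    (ΔM : M →ₗ[k] M ⊗[k] M) (RM : M →ₗ[k] M)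
    (ΔE : E →ₗ[k] E ⊗[k] E) (RE : E →ₗ[k] E) (hE : CoAnti ΔE)
    (g : E →ₗ[k] M) (homg : IsHom ΔE RE ΔM RM g) (surjg : Function.Surjective g)
    (t t' : E →ₗ[k] C)
    (h : M →ₗ[k] C ⊗[k] C) (ρ : M →ₗ[k] M ⊗[k] C) (φ : M →ₗ[k] C)
    (hh : h ∘ₗ g = TensorProduct.map t t ∘ₗ ΔE - ΔC ∘ₗ t)
    (hρ : ρ ∘ₗ g = TensorProduct.map g t ∘ₗ ΔE)
    (hφ : φ ∘ₗ g = t ∘ₗ RE - RC ∘ₗ t)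
    (h' : M →ₗ[k] C ⊗[k] C) (ρ' : M →ₗ[k] M ⊗[k] C) (φ' : M →ₗ[k] C)
    (hh' : h' ∘ₗ g = TensorProduct.map t' t' ∘ₗ ΔE - ΔC ∘ₗ t')
    (hρ' : ρ' ∘ₗ g = TensorProduct.map g t' ∘ₗ ΔE)
    (hφ' : φ' ∘ₗ g = t' ∘ₗ RE - RC ∘ₗ t')
    (s : M →ₗ[k] C) (hs : s ∘ₗ g = t' - t) :
    EquivVia ΔC RC ΔM RM s h ρ φ h' ρ' φ' := by
  have ht' : t' = t + s ∘ₗ g := by rw [hs]; abel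
  obtain ⟨hg1, hg2⟩ := homg
  have e1 : ∀ e, h (g e) = TensorProduct.map t t (ΔE e) - ΔC (t e) :=
    fun e => LinearMap.congr_fun hh e
  have e2 : ∀ e, ρ (g e) = TensorProduct.map g t (ΔE e) := fun e => LinearMap.congr_fun hρ e
  have e3 : ∀ e, φ (g e) = t (RE e) - RC (t e) := fun e => LinearMap.congr_fun hφ e
  have e1' : ∀ e, h' (g e) = TensorProduct.map t' t' (ΔE e) - ΔC (t' e) :=
    fun e => LinearMap.congr_fun hh' e
  have e2' : ∀ e, ρ' (g e) = TensorProduct.map g t' (ΔE e) := fun e => LinearMap.congr_fun hρ' e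
  have e3' : ∀ e, φ' (g e) = t' (RE e) - RC (t' e) := fun e => LinearMap.congr_fun hφ' e
  have d : ∀ e, ΔM (g e) = TensorProduct.map g g (ΔE e) :=
    fun e => (LinearMap.congr_fun hg1 e).symm
  have r : ∀ e, RM (g e) = g (RE e) := fun e => LinearMap.congr_fun hg2 e
  have m1 : ∀ x : E ⊗[k] E, TensorProduct.map s (LinearMap.id : C →ₗ[k] C)
      (TensorProduct.map g t x) = TensorProduct.map (s ∘ₗ g) t x := fun x => by
    rw [← LinearMap.comp_apply, ← TensorProduct.map_comp, LinearMap.id_comp]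
  have m2 : ∀ x : E ⊗[k] E, TensorProduct.map s s
      (TensorProduct.map g g x) = TensorProduct.map (s ∘ₗ g) (s ∘ₗ g) x := fun x => by
    rw [← LinearMap.comp_apply, ← TensorProduct.map_comp]
  have m3 : ∀ x : E ⊗[k] E, lTensor M s
      (TensorProduct.map g g x) = TensorProduct.map g (s ∘ₗ g) x := fun x => by
    rw [LinearMap.lTensor, ← LinearMap.comp_apply, ← TensorProduct.map_comp, LinearMap.id_comp]
  have m4 : ∀ e, TensorProduct.comm k C C (TensorProduct.map (s ∘ₗ g) t (ΔE e))
      = - TensorProduct.map t (s ∘ₗ g) (ΔE e) := fun e => by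
    have := LinearMap.congr_fun hE e
    simp only [LinearMap.neg_apply, LinearMap.comp_apply, LinearEquiv.coe_coe] at this
    rw [← TensorProduct.map_comm, ← map_neg, eq_comm, map_neg, neg_eq_iff_eq_neg, ← map_neg, ← this]
  refine ⟨?_, ?_, ?_⟩
  · ext1 m
    obtain ⟨e, rfl⟩ := surjg m
    simp only [LinearMap.sub_apply, LinearMap.add_apply, LinearMap.comp_apply,
      LinearEquiv.coe_coe, e1, e1', e2, d, m1, m2, m4]
    rw [ht']
    simp only [TensorProduct.map_add_left, TensorProduct.map_add_right, LinearMap.add_apply,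
      LinearMap.comp_apply, map_add]
    abel
  · ext1 m
    obtain ⟨e, rfl⟩ := surjg m
    simp only [LinearMap.sub_apply, LinearMap.comp_apply, e2, e2', d, m3]
    rw [ht']
    simp only [TensorProduct.map_add_right, LinearMap.add_apply]
    abel
  · ext1 m
    obtain ⟨e, rfl⟩ := surjg m
    simp only [LinearMap.sub_apply, LinearMap.comp_apply, e3, e3', r]
    rw [ht']
    simp only [LinearMap.add_apply, LinearMap.comp_apply, map_add]
    abel

/-- Twisting by a pair of automorphisms preserves equivalence. -/
theorem aux_twist (ΔC : C →ₗ[k] C ⊗[k] C) (RC : C →ₗ[k] C)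
    (ΔM : M →ₗ[k] M ⊗[k] M) (RM : M →ₗ[k] M) (s : M →ₗ[k] C)
    (h : M →ₗ[k] C ⊗[k] C) (ρ : M →ₗ[k] M ⊗[k] C) (φ : M →ₗ[k] C)
    (h' : M →ₗ[k] C ⊗[k] C) (ρ' : M →ₗ[k] M ⊗[k] C) (φ' : M →ₗ[k] C)
    (H : EquivVia ΔC RC ΔM RM s h ρ φ h' ρ' φ')
    (α : C →ₗ[k] C) (β : M →ₗ[k] M)
    (homα : IsHom ΔC RC ΔC RC α) (homβ : IsHom ΔM RM ΔM RM β)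
    (β' : M →ₗ[k] M) (hβ'₁ : β ∘ₗ β' = LinearMap.id) (hβ'₂ : β' ∘ₗ β = LinearMap.id) :
    EquivVia ΔC RC ΔM RM (α ∘ₗ s ∘ₗ β')
        (TensorProduct.map α α ∘ₗ h ∘ₗ β') (TensorProduct.map β α ∘ₗ ρ ∘ₗ β')
        (α ∘ₗ φ ∘ₗ β')
        (TensorProduct.map α α ∘ₗ h' ∘ₗ β') (TensorProduct.map β α ∘ₗ ρ' ∘ₗ β')
        (α ∘ₗ φ' ∘ₗ β') := by
  obtain ⟨H1, H2, H3⟩ := H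
  obtain ⟨a1, a2⟩ := homα
  obtain ⟨b1, b2⟩ := homβ
  have bb : ∀ m, β (β' m) = m := fun m => LinearMap.congr_fun hβ'₁ m
  have bb' : ∀ m, β' (β m) = m := fun m => LinearMap.congr_fun hβ'₂ m
  have D : ∀ m, ΔM m = TensorProduct.map β β (ΔM (β' m)) := fun m => by
    have := LinearMap.congr_fun b1 (β' m)
    simp only [LinearMap.comp_apply, bb] at this
    exact this.symm
  have R : ∀ m, β' (RM m) = RM (β' m) := fun m => by
    have := LinearMap.congr_fun b2 (β' m)
    simp only [LinearMap.comp_apply, bb] at this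
    rw [this, bb']
  have A : ∀ c, ΔC (α c) = TensorProduct.map α α (ΔC c) :=
    fun c => (LinearMap.congr_fun a1 c).symm
  have A2 : ∀ c, RC (α c) = α (RC c) := fun c => LinearMap.congr_fun a2 c
  have sb : (α ∘ₗ s ∘ₗ β') ∘ₗ β = α ∘ₗ s := by
    rw [LinearMap.comp_assoc, LinearMap.comp_assoc, hβ'₂, LinearMap.comp_id]
  have m1 : ∀ x, TensorProduct.map (α ∘ₗ s ∘ₗ β') (LinearMap.id : C →ₗ[k] C)
      (TensorProduct.map β α x) =
      TensorProduct.map α α (TensorProduct.map s (LinearMap.id : C →ₗ[k] C) x) := fun x => by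
    rw [← LinearMap.comp_apply, ← LinearMap.comp_apply, ← TensorProduct.map_comp,
      ← TensorProduct.map_comp, sb, LinearMap.id_comp, LinearMap.comp_id]
  have m2 : ∀ x, TensorProduct.map (α ∘ₗ s ∘ₗ β') (α ∘ₗ s ∘ₗ β')
      (TensorProduct.map β β x) =
      TensorProduct.map α α (TensorProduct.map s s x) := fun x => by
    rw [← LinearMap.comp_apply, ← LinearMap.comp_apply, ← TensorProduct.map_comp,
      ← TensorProduct.map_comp, sb]
  have m3 : ∀ x, lTensor M (α ∘ₗ s ∘ₗ β') (TensorProduct.map β β x) =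
      TensorProduct.map β α (lTensor M s x) := fun x => by
    rw [LinearMap.lTensor, LinearMap.lTensor, ← LinearMap.comp_apply, ← LinearMap.comp_apply,
      ← TensorProduct.map_comp, ← TensorProduct.map_comp, sb, LinearMap.id_comp,
      LinearMap.comp_id]
  refine ⟨?_, ?_, ?_⟩
  · ext1 m
    have := congrArg (TensorProduct.map α α) (LinearMap.congr_fun H1 (β' m))
    simp only [LinearMap.sub_apply, LinearMap.add_apply, LinearMap.comp_apply,
      LinearEquiv.coe_coe, map_sub, map_add, TensorProduct.map_comm] at this
    simp only [LinearMap.sub_apply, LinearMap.add_apply, LinearMap.comp_apply,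
      LinearEquiv.coe_coe, m1]
    rw [D m, m2, A, this]
  · ext1 m
    have := congrArg (TensorProduct.map β α) (LinearMap.congr_fun H2 (β' m))
    simp only [LinearMap.sub_apply, LinearMap.comp_apply, map_sub] at this
    simp only [LinearMap.sub_apply, LinearMap.comp_apply]
    rw [D m, m3, this]
  · ext1 m
    have := congrArg α (LinearMap.congr_fun H3 (β' m))
    simp only [LinearMap.sub_apply, LinearMap.comp_apply, map_sub] at this
    simp only [LinearMap.sub_apply, LinearMap.comp_apply, A2, R]
    exact this

theorem stmt15 (lam : k) (ΔC : C →ₗ[k] C ⊗[k] C) (RC : C →ₗ[k] C)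
    (ΔM : M →ₗ[k] M ⊗[k] M) (RM : M →ₗ[k] M)
    (ΔE : E →ₗ[k] E ⊗[k] E) (RE : E →ₗ[k] E)
    (hC : IsRBLC lam ΔC RC) (hM : IsRBLC lam ΔM RM) (hE : IsRBLC lam ΔE RE)
    (f : C →ₗ[k] E) (g : E →ₗ[k] M)
    (homf : IsHom ΔC RC ΔE RE f) (homg : IsHom ΔE RE ΔM RM g)
    (injf : Function.Injective f) (surjg : Function.Surjective g)
    (hexact : LinearMap.range f = LinearMap.ker g)
    (t t' : E →ₗ[k] C) (ht : t ∘ₗ f = LinearMap.id) (ht' : t' ∘ₗ f = LinearMap.id)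
    (h : M →ₗ[k] C ⊗[k] C) (ρ : M →ₗ[k] M ⊗[k] C) (φ : M →ₗ[k] C)
    (hh : h ∘ₗ g = TensorProduct.map t t ∘ₗ ΔE - ΔC ∘ₗ t)
    (hρ : ρ ∘ₗ g = TensorProduct.map g t ∘ₗ ΔE)
    (hφ : φ ∘ₗ g = t ∘ₗ RE - RC ∘ₗ t)
    (h' : M →ₗ[k] C ⊗[k] C) (ρ' : M →ₗ[k] M ⊗[k] C) (φ' : M →ₗ[k] C)
    (hh' : h' ∘ₗ g = TensorProduct.map t' t' ∘ₗ ΔE - ΔC ∘ₗ t')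
    (hρ' : ρ' ∘ₗ g = TensorProduct.map g t' ∘ₗ ΔE)
    (hφ' : φ' ∘ₗ g = t' ∘ₗ RE - RC ∘ₗ t')
    (α : C →ₗ[k] C) (β : M →ₗ[k] M)
    (homα : IsHom ΔC RC ΔC RC α) (bijα : Function.Bijective α)
    (homβ : IsHom ΔM RM ΔM RM β) (bijβ : Function.Bijective β)
    (β' : M →ₗ[k] M) (hβ'₁ : β ∘ₗ β' = LinearMap.id) (hβ'₂ : β' ∘ₗ β = LinearMap.id) :
    -- `s(g(e)) = t'(e) − t(e)` is well defined:
    (∀ e e' : E, g e = g e' → t' e - t e = t' e' - t e') ∧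
    -- the twisted cocycles are equivalent via `α ∘ s ∘ β⁻¹`:
    (∀ s : M →ₗ[k] C, s ∘ₗ g = t' - t →
      EquivVia ΔC RC ΔM RM (α ∘ₗ s ∘ₗ β')
        (TensorProduct.map α α ∘ₗ h ∘ₗ β') (TensorProduct.map β α ∘ₗ ρ ∘ₗ β')
        (α ∘ₗ φ ∘ₗ β')
        (TensorProduct.map α α ∘ₗ h' ∘ₗ β') (TensorProduct.map β α ∘ₗ ρ' ∘ₗ β')
        (α ∘ₗ φ' ∘ₗ β')) ∧
    -- consequently, the Wells class `[(h_{(α,β)},ρ_{(α,β)},φ_{(α,β)}) − (h,ρ,φ)]`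
    -- does not depend on the choice of retraction:
    Quot.mk (PairRel ΔC RC ΔM RM)
        ((TensorProduct.map α α ∘ₗ h' ∘ₗ β', TensorProduct.map β α ∘ₗ ρ' ∘ₗ β',
            α ∘ₗ φ' ∘ₗ β'), (h', ρ', φ'))
      = Quot.mk (PairRel ΔC RC ΔM RM)
        ((TensorProduct.map α α ∘ₗ h ∘ₗ β', TensorProduct.map β α ∘ₗ ρ ∘ₗ β',
            α ∘ₗ φ ∘ₗ β'), (h, ρ, φ)) := by
  have key : ∀ s : M →ₗ[k] C, s ∘ₗ g = t' - t → EquivVia ΔC RC ΔM RM s h ρ φ h' ρ' φ' :=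
    fun s hs => aux_equiv ΔC RC ΔM RM ΔE RE hE.1 g homg surjg t t' h ρ φ hh hρ hφ
      h' ρ' φ' hh' hρ' hφ' s hs
  have tw := fun (s : M →ₗ[k] C) (hs : s ∘ₗ g = t' - t) =>
    aux_twist ΔC RC ΔM RM s h ρ φ h' ρ' φ' (key s hs) α β homα homβ β' hβ'₁ hβ'₂
  have wd : ∀ e e' : E, g e = g e' → t' e - t e = t' e' - t e' := by
    intro e e' hee
    have hk : e - e' ∈ LinearMap.range f := by
      rw [hexact, LinearMap.mem_ker, map_sub, hee, sub_self]
    obtain ⟨c, hc⟩ := hk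
    have h1 : t (e - e') = c := by rw [← hc]; exact LinearMap.congr_fun ht c
    have h2 : t' (e - e') = c := by rw [← hc]; exact LinearMap.congr_fun ht' c
    have h3 := h2.trans h1.symm
    rw [map_sub, map_sub] at h3
    rw [sub_eq_sub_iff_sub_eq_sub]
    exact h3
  refine ⟨wd, tw, ?_⟩
  obtain ⟨i, hi⟩ := LinearMap.exists_rightInverse_of_surjective g (LinearMap.range_eq_top.2 surjg)
  have hs : ((t' - t) ∘ₗ i) ∘ₗ g = t' - t := by
    ext1 e
    exact wd (i (g e)) e (LinearMap.congr_fun hi (g e))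
  exact (Quot.sound ⟨⟨_, tw _ hs⟩, ⟨_, key _ hs⟩⟩).symm


end
end

section
/- Let 0 → C →f E →g M → 0 be an abelian extension of the λ-weighted Rota-Baxter Lie coalgebra (C, Δ_C, R_C) by (M, Δ_M, R_M) (so Δ_M = 0), let t be a retraction, and define ρ : M → M⊗C by ρ(g(e)) = (g⊗t)Δ_E(e). Then (M, ρ, R_M) is a right Lie comodule of (C, Δ_C, R_C): (I⊗Δ_C)ρ − (ρ⊗I)ρ + (I⊗τ)(ρ⊗I)ρ = 0 and (R_M⊗R_C)ρ = (R_M⊗I + I⊗R_C + λI)ρR_M. -/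
open TensorProduct LinearMap

section

variable {k : Type*} [Field k]
variable {C : Type*} [AddCommGroup C] [Module k C]
variable {M : Type*} [AddCommGroup M] [Module k M]
variable {E : Type*} [AddCommGroup E] [Module k E]

/-- Right Lie comodule condition `(I⊗Δ)ρ - (ρ⊗I)ρ + (I⊗τ)(ρ⊗I)ρ = 0`. -/
def IsCoMod (Δ : C →ₗ[k] C ⊗[k] C) (ρ : M →ₗ[k] M ⊗[k] C) : Prop :=
  lTensor M Δ ∘ₗ ρ
    - (TensorProduct.assoc k M C C).toLinearMap ∘ₗ rTensor C ρ ∘ₗ ρ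
    + lTensor M (TensorProduct.comm k C C).toLinearMap ∘ₗ
        (TensorProduct.assoc k M C C).toLinearMap ∘ₗ rTensor C ρ ∘ₗ ρ = 0

/-- `(R_M⊗R_C)ρ = (R_M⊗I + I⊗R_C + λI)ρR_M`. -/
def IsRBCoModMap (lam : k) (ρ : M →ₗ[k] M ⊗[k] C) (RC : C →ₗ[k] C) (RM : M →ₗ[k] M) : Prop :=
  TensorProduct.map RM RC ∘ₗ ρ
    = (rTensor C RM + lTensor M RC +
        lam • (LinearMap.id : M ⊗[k] C →ₗ[k] M ⊗[k] C)) ∘ₗ ρ ∘ₗ RM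

theorem stmt18 (lam : k) (ΔC : C →ₗ[k] C ⊗[k] C) (RC : C →ₗ[k] C)
    (ΔM : M →ₗ[k] M ⊗[k] M) (RM : M →ₗ[k] M)
    (ΔE : E →ₗ[k] E ⊗[k] E) (RE : E →ₗ[k] E)
    (hC : IsRBLC lam ΔC RC) (hM : IsRBLC lam ΔM RM) (hE : IsRBLC lam ΔE RE)
    -- the extension is abelian:
    (habelian : ΔM = 0)
    (f : C →ₗ[k] E) (g : E →ₗ[k] M)
    (homf : IsHom ΔC RC ΔE RE f) (homg : IsHom ΔE RE ΔM RM g)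
    (injf : Function.Injective f) (surjg : Function.Surjective g)
    (hexact : LinearMap.range f = LinearMap.ker g)
    (t : E →ₗ[k] C) (ht : t ∘ₗ f = LinearMap.id)
    (ρ : M →ₗ[k] M ⊗[k] C)
    (hρ : ρ ∘ₗ g = TensorProduct.map g t ∘ₗ ΔE) :
    IsCoMod ΔC ρ ∧ IsRBCoModMap lam ρ RC RM := by
  obtain ⟨-, hJ, hR⟩ := hE
  obtain ⟨hf1, hf2⟩ := homf
  obtain ⟨hg1, hg2⟩ := homg
  subst habelian
  have htf : ∀ c, t (f c) = c := fun c => LinearMap.congr_fun ht c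
  have hgf : ∀ c, g (f c) = 0 := fun c => by
    have : f c ∈ LinearMap.ker g := hexact ▸ LinearMap.mem_range_self f c
    exact this
  obtain ⟨σ, hσ⟩ := g.exists_rightInverse_of_surjective (LinearMap.range_eq_top.mpr surjg)
  have hgσ : ∀ m, g (σ m) = m := fun m => LinearMap.congr_fun hσ m
  have hdec : (LinearMap.id : E →ₗ[k] E) = f ∘ₗ t + (σ - f ∘ₗ t ∘ₗ σ) ∘ₗ g := by
    ext e
    have : e - σ (g e) ∈ LinearMap.range f := by
      rw [hexact, LinearMap.mem_ker, map_sub, hgσ, sub_self]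
    obtain ⟨c, hc⟩ := this
    have he : e = f c + σ (g e) := by rw [hc]; abel
    have hte : t e = c + t (σ (g e)) := by
      conv_lhs => rw [he]
      rw [map_add, htf]
    simp only [LinearMap.id_apply, LinearMap.add_apply, LinearMap.comp_apply,
      LinearMap.sub_apply, hte, map_add]
    conv_lhs => rw [he]
    abel
  have hgg : TensorProduct.map g g ∘ₗ ΔE = 0 := by rw [hg1, LinearMap.zero_comp]
  have key : ∀ {X : Type _} [AddCommGroup X] [Module k X] (u : E →ₗ[k] X),
      TensorProduct.map g u ∘ₗ ΔE = TensorProduct.map LinearMap.id (u ∘ₗ f) ∘ₗ ρ ∘ₗ g := by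
    intro X _ _ u
    have h1 : u = (u ∘ₗ f) ∘ₗ t + (u ∘ₗ (σ - f ∘ₗ t ∘ₗ σ)) ∘ₗ g := by
      rw [LinearMap.comp_assoc, LinearMap.comp_assoc, ← LinearMap.comp_add, ← hdec,
        LinearMap.comp_id]
    conv_lhs => rw [h1, TensorProduct.map_add_right, LinearMap.add_comp]
    have h2 : ∀ {Y : Type _} [AddCommGroup Y] [Module k Y] (v : Y →ₗ[k] X) (w : E →ₗ[k] Y),
        TensorProduct.map g (v ∘ₗ w) =
          TensorProduct.map LinearMap.id v ∘ₗ TensorProduct.map g w := by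
      intro Y _ _ v w
      rw [← TensorProduct.map_comp, LinearMap.id_comp]
    have h3 : TensorProduct.map g ((u ∘ₗ (σ - f ∘ₗ t ∘ₗ σ)) ∘ₗ g) =
          TensorProduct.map LinearMap.id (u ∘ₗ (σ - f ∘ₗ t ∘ₗ σ)) ∘ₗ TensorProduct.map g g := by
      rw [← TensorProduct.map_comp, LinearMap.id_comp]
    rw [h2, h3, LinearMap.comp_assoc, LinearMap.comp_assoc, hgg, LinearMap.comp_zero, add_zero, hρ]
  have epi : ∀ {X : Type _} [AddCommGroup X] [Module k X] (a b : M →ₗ[k] X),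
      a ∘ₗ g = b ∘ₗ g → a = b := by
    intro X _ _ a b h
    exact (LinearMap.cancel_right surjg).mp h
  constructor
  · unfold IsCoMod
    unfold CoJacobi at hJ
    have e1 : TensorProduct.map g (TensorProduct.map t t) ∘ₗ lTensor E ΔE ∘ₗ ΔE
        = lTensor M ΔC ∘ₗ ρ ∘ₗ g := by
      have : TensorProduct.map g (TensorProduct.map t t) ∘ₗ lTensor E ΔE
          = TensorProduct.map g (TensorProduct.map t t ∘ₗ ΔE) := by
        rw [lTensor, ← TensorProduct.map_comp, LinearMap.comp_id]
      rw [← LinearMap.comp_assoc, this, key, LinearMap.comp_assoc, ← hf1,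
        ← LinearMap.comp_assoc ΔC, ← TensorProduct.map_comp, ht, TensorProduct.map_id,
        LinearMap.id_comp]
      rfl
    have e2 : TensorProduct.map g (TensorProduct.map t t) ∘ₗ
          (TensorProduct.assoc k E E E).toLinearMap ∘ₗ rTensor E ΔE ∘ₗ ΔE
        = (TensorProduct.assoc k M C C).toLinearMap ∘ₗ rTensor C ρ ∘ₗ ρ ∘ₗ g := by
      have a1 : TensorProduct.map g (TensorProduct.map t t) ∘ₗ
          (TensorProduct.assoc k E E E).toLinearMap
          = (TensorProduct.assoc k M C C).toLinearMap ∘ₗ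
            TensorProduct.map (TensorProduct.map g t) t := by
        apply TensorProduct.ext_threefold
        intro x y z
        simp
      have a2 : TensorProduct.map (TensorProduct.map g t) t ∘ₗ rTensor E ΔE
          = rTensor C ρ ∘ₗ TensorProduct.map g t := by
        rw [rTensor, rTensor, ← TensorProduct.map_comp, ← TensorProduct.map_comp, hρ,
          LinearMap.comp_id, LinearMap.id_comp]
      rw [← LinearMap.comp_assoc, a1, LinearMap.comp_assoc, ← LinearMap.comp_assoc ΔE, a2,
        LinearMap.comp_assoc, hρ]
    have e3 : TensorProduct.map g (TensorProduct.map t t) ∘ₗ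
          lTensor E (TensorProduct.comm k E E).toLinearMap
        = lTensor M (TensorProduct.comm k C C).toLinearMap ∘ₗ
          TensorProduct.map g (TensorProduct.map t t) := by
      apply TensorProduct.ext
      ext x y z
      simp
    apply epi
    have := congrArg (fun F => TensorProduct.map g (TensorProduct.map t t) ∘ₗ F) hJ
    simp only [LinearMap.comp_add, LinearMap.comp_sub, LinearMap.comp_zero] at this
    rw [e1, e2, ← LinearMap.comp_assoc _ _ (TensorProduct.map g (TensorProduct.map t t)), e3,
      LinearMap.comp_assoc, e2] at this
    simp only [LinearMap.add_comp, LinearMap.sub_comp, LinearMap.zero_comp, LinearMap.comp_assoc]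
    exact this
  · unfold IsRBCoModMap
    unfold IsRBO at hR
    have hk : (t ∘ₗ RE) ∘ₗ f = RC := by
      rw [LinearMap.comp_assoc, hf2, ← LinearMap.comp_assoc, ht, LinearMap.id_comp]
    have l1 : TensorProduct.map g t ∘ₗ TensorProduct.map RE RE ∘ₗ ΔE
        = TensorProduct.map RM RC ∘ₗ ρ ∘ₗ g := by
      have : TensorProduct.map g t ∘ₗ TensorProduct.map RE RE
          = rTensor C RM ∘ₗ TensorProduct.map g (t ∘ₗ RE) := by
        rw [rTensor, ← TensorProduct.map_comp, ← TensorProduct.map_comp, hg2, LinearMap.id_comp]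
      rw [← LinearMap.comp_assoc, this, LinearMap.comp_assoc, key, hk, ← LinearMap.comp_assoc,
        rTensor, ← TensorProduct.map_comp, LinearMap.id_comp, LinearMap.comp_id]
    have l2 : TensorProduct.map g t ∘ₗ lTensor E RE ∘ₗ ΔE = lTensor M RC ∘ₗ ρ ∘ₗ g := by
      rw [← LinearMap.comp_assoc, lTensor, ← TensorProduct.map_comp, LinearMap.comp_id, key, hk]
      rfl
    have l3 : TensorProduct.map g t ∘ₗ rTensor E RE ∘ₗ ΔE = rTensor C RM ∘ₗ ρ ∘ₗ g := by
      have : TensorProduct.map g t ∘ₗ rTensor E RE = rTensor C RM ∘ₗ TensorProduct.map g t := by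
        rw [rTensor, rTensor, ← TensorProduct.map_comp, ← TensorProduct.map_comp, hg2,
          LinearMap.id_comp, LinearMap.comp_id]
      rw [← LinearMap.comp_assoc, this, LinearMap.comp_assoc, hρ]
    apply epi
    rw [LinearMap.comp_assoc, ← l1, hR]
    ext e
    have m2 := LinearMap.congr_fun l2 (RE e)
    have m3 := LinearMap.congr_fun l3 (RE e)
    have m4 := LinearMap.congr_fun hρ (RE e)
    have m5 := LinearMap.congr_fun hg2 e
    simp only [LinearMap.comp_apply] at m2 m3 m4 m5
    simp only [LinearMap.comp_apply, LinearMap.add_apply, LinearMap.smul_apply,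
      LinearMap.id_apply, map_add, map_smul, m2, m3, ← m4, m5]
    abel

end
end

section
/- Let 0 → C →f E →g M → 0 be an abelian extension of the λ-weighted Rota-Baxter Lie coalgebra (C, Δ_C, R_C) by (M, Δ_M, R_M) (so Δ_M = 0) with retraction t, and let (h, ρ, φ) be the induced maps h(g(e)) = (t⊗t)Δ_E(e) − Δ_C t(e), ρ(g(e)) = (g⊗t)Δ_E(e), φ(g(e)) = tR_E(e) − R_C t(e). A pair (α, β) ∈ Aut(C)×Aut(M) is extensible with respect to this abelian extension if and only if there exists a linear map s : M → C satisfying: hβ − (α⊗α)h = (s⊗α)ρ − τ(s⊗α)ρ − Δ_C s; ρβ = (β⊗α)ρ; and φβ − αφ = sR_M − R_C s. -/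
open TensorProduct LinearMap

section

variable {k : Type*} [Field k]
variable {C : Type*} [AddCommGroup C] [Module k C]
variable {M : Type*} [AddCommGroup M] [Module k M]
variable {E : Type*} [AddCommGroup E] [Module k E]

theorem tensor_zero_aux (f : C →ₗ[k] E) (g : E →ₗ[k] M) (t : E →ₗ[k] C) (q : M →ₗ[k] E)
    (hq : f ∘ₗ t + q ∘ₗ g = LinearMap.id) (x y : E ⊗[k] E)
    (h1 : TensorProduct.map t t x = TensorProduct.map t t y)
    (h2 : TensorProduct.map g t x = TensorProduct.map g t y)
    (h3 : TensorProduct.map t g x = TensorProduct.map t g y)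
    (h4 : TensorProduct.map g g x = TensorProduct.map g g y) : x = y := by
  have key : ∀ z : E ⊗[k] E, z = TensorProduct.map f f (TensorProduct.map t t z)
      + TensorProduct.map f q (TensorProduct.map t g z)
      + (TensorProduct.map q f (TensorProduct.map g t z)
      + TensorProduct.map q q (TensorProduct.map g g z)) := by
    intro z
    have : TensorProduct.map (f ∘ₗ t + q ∘ₗ g) (f ∘ₗ t + q ∘ₗ g) z = z := by
      rw [hq, TensorProduct.map_id]; rfl
    conv_lhs => rw [← this]
    simp only [TensorProduct.map_add_left, TensorProduct.map_add_right, LinearMap.add_apply,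
      TensorProduct.map_comp, LinearMap.comp_apply]
    abel
  rw [key x, key y, h1, h2, h3, h4]

theorem anti_flip_aux {A B : Type*} [AddCommGroup A] [Module k A] [AddCommGroup B] [Module k B]
    (ΔE : E →ₗ[k] E ⊗[k] E) (hE : CoAnti ΔE) (a : E →ₗ[k] A) (b : E →ₗ[k] B) (e : E) :
    TensorProduct.map b a (ΔE e) =
      -(TensorProduct.comm k A B (TensorProduct.map a b (ΔE e))) := by
  have h1 : ΔE e = -(TensorProduct.comm k E E (ΔE e)) := LinearMap.congr_fun hE e
  have h2 : ∀ z : E ⊗[k] E, TensorProduct.map b a (TensorProduct.comm k E E z)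
      = TensorProduct.comm k A B (TensorProduct.map a b z) := by
    intro z
    induction z with
    | zero => simp
    | tmul x y => simp
    | add x y hx hy => simp only [map_add, hx, hy]
  conv_lhs => rw [h1]
  rw [map_neg, h2]

theorem expand_aux (ΔE : E →ₗ[k] E ⊗[k] E) (hE : CoAnti ΔE) (g : E →ₗ[k] M) (t : E →ₗ[k] C)
    (gg : ∀ e, TensorProduct.map g g (ΔE e) = 0)
    (ρ : M →ₗ[k] M ⊗[k] C) (hρ : ∀ e, ρ (g e) = TensorProduct.map g t (ΔE e))
    (α : C →ₗ[k] C) (β : M →ₗ[k] M) (s : M →ₗ[k] C) (γ : E →ₗ[k] E)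
    (htγ : t ∘ₗ γ = α ∘ₗ t + s ∘ₗ g) (hgγ : g ∘ₗ γ = β ∘ₗ g) (e : E) :
    TensorProduct.map t t (TensorProduct.map γ γ (ΔE e)) =
        TensorProduct.map α α (TensorProduct.map t t (ΔE e))
        + TensorProduct.map s α (ρ (g e))
        - TensorProduct.comm k C C (TensorProduct.map s α (ρ (g e))) ∧
    TensorProduct.map g t (TensorProduct.map γ γ (ΔE e)) = TensorProduct.map β α (ρ (g e)) ∧
    TensorProduct.map g g (TensorProduct.map γ γ (ΔE e)) = 0 := by
  have e1 := anti_flip_aux ΔE hE (s ∘ₗ g) (α ∘ₗ t) e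
  refine ⟨?_, ?_, ?_⟩
  · rw [← LinearMap.comp_apply, ← TensorProduct.map_comp, htγ]
    simp only [TensorProduct.map_add_left, TensorProduct.map_add_right, LinearMap.add_apply]
    rw [e1]
    simp only [TensorProduct.map_comp, LinearMap.comp_apply, gg, hρ, map_zero]
    abel
  · rw [← LinearMap.comp_apply, ← TensorProduct.map_comp, htγ, hgγ]
    simp only [TensorProduct.map_add_right, LinearMap.add_apply, TensorProduct.map_comp,
      LinearMap.comp_apply, gg, hρ, map_zero, add_zero]
  · rw [← LinearMap.comp_apply, ← TensorProduct.map_comp, hgγ]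
    simp only [TensorProduct.map_comp, LinearMap.comp_apply, gg, map_zero]

theorem stmt19 (lam : k) (ΔC : C →ₗ[k] C ⊗[k] C) (RC : C →ₗ[k] C)
    (ΔM : M →ₗ[k] M ⊗[k] M) (RM : M →ₗ[k] M)
    (ΔE : E →ₗ[k] E ⊗[k] E) (RE : E →ₗ[k] E)
    (hC : IsRBLC lam ΔC RC) (hM : IsRBLC lam ΔM RM) (hE : IsRBLC lam ΔE RE)
    -- the extension is abelian:
    (habelian : ΔM = 0)
    (f : C →ₗ[k] E) (g : E →ₗ[k] M)
    (homf : IsHom ΔC RC ΔE RE f) (homg : IsHom ΔE RE ΔM RM g)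
    (injf : Function.Injective f) (surjg : Function.Surjective g)
    (hexact : LinearMap.range f = LinearMap.ker g)
    (t : E →ₗ[k] C) (ht : t ∘ₗ f = LinearMap.id)
    (h : M →ₗ[k] C ⊗[k] C) (ρ : M →ₗ[k] M ⊗[k] C) (φ : M →ₗ[k] C)
    (hh : h ∘ₗ g = TensorProduct.map t t ∘ₗ ΔE - ΔC ∘ₗ t)
    (hρ : ρ ∘ₗ g = TensorProduct.map g t ∘ₗ ΔE)
    (hφ : φ ∘ₗ g = t ∘ₗ RE - RC ∘ₗ t)
    (α : C →ₗ[k] C) (β : M →ₗ[k] M)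
    (homα : IsHom ΔC RC ΔC RC α) (bijα : Function.Bijective α)
    (homβ : IsHom ΔM RM ΔM RM β) (bijβ : Function.Bijective β) :
    Extensible ΔE RE f g α β ↔
      ∃ s : M →ₗ[k] C,
        -- hβ − (α⊗α)h = (s⊗α)ρ − τ(s⊗α)ρ − Δ_C s
        h ∘ₗ β - TensorProduct.map α α ∘ₗ h
          = TensorProduct.map s α ∘ₗ ρ
            - (TensorProduct.comm k C C).toLinearMap ∘ₗ TensorProduct.map s α ∘ₗ ρ
            - ΔC ∘ₗ s ∧
        -- ρβ = (β⊗α)ρ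
        ρ ∘ₗ β = TensorProduct.map β α ∘ₗ ρ ∧
        -- φβ − αφ = sR_M − R_C s
        φ ∘ₗ β - α ∘ₗ φ = s ∘ₗ RM - RC ∘ₗ s := by
  subst habelian
  have gg : ∀ e, TensorProduct.map g g (ΔE e) = 0 := fun e => by
    simpa using LinearMap.congr_fun homg.1 e
  have hρ' : ∀ e, ρ (g e) = TensorProduct.map g t (ΔE e) := LinearMap.congr_fun hρ
  have hh' : ∀ e, h (g e) = TensorProduct.map t t (ΔE e) - ΔC (t e) := LinearMap.congr_fun hh
  have hφ' : ∀ e, φ (g e) = t (RE e) - RC (t e) := LinearMap.congr_fun hφ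
  have htf : ∀ c, t (f c) = c := LinearMap.congr_fun ht
  have hgf : ∀ c, g (f c) = 0 := fun c => by
    have : f c ∈ LinearMap.ker g := hexact ▸ LinearMap.mem_range_self f c
    exact this
  have hker : ∀ e, g e = 0 → ∃ c, f c = e := fun e he => by
    have : e ∈ LinearMap.range f := hexact ▸ he
    exact this
  have hRg : ∀ e, RM (g e) = g (RE e) := LinearMap.congr_fun homg.2
  have hRα : ∀ c, RC (α c) = α (RC c) := LinearMap.congr_fun homα.2
  have hRβ : ∀ m, RM (β m) = β (RM m) := LinearMap.congr_fun homβ.2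
  have hΔα : ∀ c, TensorProduct.map α α (ΔC c) = ΔC (α c) := LinearMap.congr_fun homα.1
  -- a linear section of `g` complementary to `t`
  obtain ⟨q₀, hq₀⟩ := LinearMap.exists_rightInverse_of_surjective g
    (LinearMap.range_eq_top.mpr surjg)
  have hq₀' : ∀ m, g (q₀ m) = m := LinearMap.congr_fun hq₀
  obtain ⟨q, hqdef⟩ : ∃ q : M →ₗ[k] E, q = q₀ - f ∘ₗ t ∘ₗ q₀ := ⟨_, rfl⟩
  have hgq : ∀ m, g (q m) = m := fun m => by simp [hqdef, hq₀', hgf]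
  have htq : ∀ m, t (q m) = 0 := fun m => by simp [hqdef, htf]
  have hsum' : ∀ e, f (t e) + q (g e) = e := fun e => by
    obtain ⟨c, hc⟩ := hker (e - f (t e) - q (g e)) (by simp [hgf, hgq])
    have hc0 : c = 0 := by rw [← htf c, hc]; simp [htf, htq]
    rw [hc0, map_zero] at hc
    rw [eq_comm, sub_sub, sub_eq_zero] at hc
    exact hc.symm
  have hsum : f ∘ₗ t + q ∘ₗ g = LinearMap.id := LinearMap.ext hsum'
  constructor
  · rintro ⟨γ, ⟨hγΔ, hγR⟩, -, -, hγf, hgγ⟩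
    have hγf' : ∀ c, γ (f c) = f (α c) := LinearMap.congr_fun hγf
    have hgγ' : ∀ e, g (γ e) = β (g e) := LinearMap.congr_fun hgγ
    have hγR' : ∀ e, RE (γ e) = γ (RE e) := LinearMap.congr_fun hγR
    have hγΔ' : ∀ e, TensorProduct.map γ γ (ΔE e) = ΔE (γ e) := LinearMap.congr_fun hγΔ
    have htγ' : ∀ e, t (γ e) = α (t e) + (t ∘ₗ γ ∘ₗ q) (g e) := fun e => by
      conv_lhs => rw [← hsum' e]
      simp [hγf', htf]
    obtain ⟨s, hs⟩ : ∃ s, s = t ∘ₗ γ ∘ₗ q := ⟨_, rfl⟩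
    rw [← hs] at htγ'
    have ex := expand_aux ΔE hE.1 g t gg ρ hρ' α β s γ (LinearMap.ext htγ') hgγ
    refine ⟨s, ?_, ?_, ?_⟩
    · ext m
      obtain ⟨e, rfl⟩ := surjg m
      have := (ex e).1
      simp only [LinearMap.sub_apply, LinearMap.comp_apply, LinearEquiv.coe_coe]
      rw [← hgγ', hh', hh', htγ', ← hγΔ', this, map_sub, map_add, hΔα]
      abel
    · ext m
      obtain ⟨e, rfl⟩ := surjg m
      simp only [LinearMap.comp_apply]
      rw [← (ex e).2.1, hγΔ', ← hgγ', hρ']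
    · ext m
      obtain ⟨e, rfl⟩ := surjg m
      simp only [LinearMap.sub_apply, LinearMap.comp_apply]
      rw [← hgγ', hφ', hφ', hγR', htγ', htγ', hRg, map_add, map_sub, hRα]
      abel
  · rintro ⟨s, h1, h2, h3⟩
    obtain ⟨γ, hγ⟩ : ∃ γ : E →ₗ[k] E, γ = f ∘ₗ (α ∘ₗ t + s ∘ₗ g) + q ∘ₗ β ∘ₗ g := ⟨_, rfl⟩
    have htγ' : ∀ e, t (γ e) = α (t e) + s (g e) := fun e => by simp [hγ, htf, htq]
    have hgγ' : ∀ e, g (γ e) = β (g e) := fun e => by simp [hγ, hgf, hgq]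
    have hγf' : ∀ c, γ (f c) = f (α c) := fun c => by simp [hγ, hgf, htf]
    have ex := expand_aux ΔE hE.1 g t gg ρ hρ' α β s γ (LinearMap.ext htγ') (LinearMap.ext hgγ')
    have gt : ∀ e, TensorProduct.map g t (TensorProduct.map γ γ (ΔE e))
        = TensorProduct.map g t (ΔE (γ e)) := fun e => by
      rw [(ex e).2.1, ← hρ', hgγ']
      exact (LinearMap.congr_fun h2 (g e)).symm
    refine ⟨γ, ⟨?_, ?_⟩, ⟨?_, ?_⟩, ?_, LinearMap.ext hγf', LinearMap.ext hgγ'⟩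
    · refine LinearMap.ext fun e => tensor_zero_aux f g t q hsum _ _ ?_ (gt e) ?_ ?_
      · have := LinearMap.congr_fun h1 (g e)
        simp only [LinearMap.sub_apply, LinearMap.comp_apply, LinearEquiv.coe_coe] at this
        rw [← hgγ', hh', hh', htγ', map_sub, map_add, hΔα] at this
        simp only [LinearMap.comp_apply]
        rw [(ex e).1, add_sub_assoc, ← sub_eq_zero]
        rw [← sub_eq_zero] at this
        rw [← neg_eq_zero, ← this]
        abel
      · have h5 := anti_flip_aux ΔE hE.1 (g ∘ₗ γ) (t ∘ₗ γ) e
        rw [TensorProduct.map_comp, TensorProduct.map_comp] at h5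
        simp only [LinearMap.comp_apply] at h5 ⊢
        rw [h5, gt, anti_flip_aux ΔE hE.1 g t]
      · simp only [LinearMap.comp_apply]
        rw [(ex e).2.2, gg]
    · refine LinearMap.ext fun e => ?_
      have ht' : t (RE (γ e)) = t (γ (RE e)) := by
        have := LinearMap.congr_fun h3 (g e)
        simp only [LinearMap.sub_apply, LinearMap.comp_apply] at this
        rw [← hgγ', hφ', hφ', htγ', hRg, map_add, map_sub, hRα] at this
        rw [htγ', ← sub_eq_zero]
        rw [← sub_eq_zero] at this
        rw [← this]
        abel
      have hg' : g (RE (γ e)) = g (γ (RE e)) := by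
        rw [← hRg, hgγ', hgγ', hRβ, hRg]
      simp only [LinearMap.comp_apply]
      rw [← hsum' (RE (γ e)), ht', hg', hsum']
    · rw [injective_iff_map_eq_zero]
      intro e he
      have hge : g e = 0 := by
        apply bijβ.1
        rw [← hgγ', he, map_zero, map_zero]
      obtain ⟨c, rfl⟩ := hker e hge
      rw [hγf'] at he
      have : α c = 0 := injf (by rw [he, map_zero])
      have : c = 0 := bijα.1 (by rw [this, map_zero])
      rw [this, map_zero]
    · intro e
      obtain ⟨m, hm⟩ := bijβ.2 (g e)
      obtain ⟨e', rfl⟩ := surjg m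
      obtain ⟨c, hc⟩ := hker (e - γ e') (by rw [map_sub, hgγ', hm, sub_self])
      obtain ⟨c', rfl⟩ := bijα.2 c
      exact ⟨e' + f c', by rw [map_add, hγf', hc]; abel⟩
    · ext e
      constructor
      · rintro ⟨_, ⟨c, rfl⟩, rfl⟩
        exact ⟨α c, (hγf' c).symm⟩
      · rintro ⟨c, rfl⟩
        obtain ⟨c', rfl⟩ := bijα.2 c
        exact ⟨f c', ⟨c', rfl⟩, hγf' c'⟩

end
end
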